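/- arXiv:2405.04501 — 3 statements merged into one kernel-verified Lean document; each statement's English description precedes it below -/
import Mathlib

section
/- Let d ≥ 3 and m² ≥ 0. Then the integral ∫_{(0,1)^d} 1/(m² + 2 Σ_{k=1}^d (1 − cos(2π x_k))) dx is finite and n^{−d} Σ_{x ∈ {0,…,n−1}^d, x ≠ 0} 1/(m² + 2 Σ_{k=1}^d (1 − cos(2π x_k/n))) converges, as n → ∞, to ∫_{(0,1)^d} 1/(m² + 2 Σ_{k=1}^d (1 − cos(2π x_k))) dx; in particular for m² = 0 the limit equals β_c. -/
open MeasureTheory ProbabilityTheory Filter Topology Matrix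
open scoped Classical ENNReal

noncomputable section

/-- The massive lattice Green's function `G_{ℤ^d, m²}(x, y)`. -/
def massGreenZ (d : ℕ) (m2 : ℝ) (x y : Fin d → ℤ) : ℝ :=
  ∫ t in Set.Icc (0 : Fin d → ℝ) 1,
    Real.cos (2 * Real.pi * ∑ i, ((x i : ℝ) - (y i : ℝ)) * t i) /
      (m2 + 2 * ∑ i, (1 - Real.cos (2 * Real.pi * t i)))

/-- The lattice Green's function `G_{ℤ^d}(x, y)` (for `d ≥ 3`). -/
def greenZ (d : ℕ) (x y : Fin d → ℤ) : ℝ := massGreenZ d 0 x y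

/-- The critical inverse temperature `β_c = G_{ℤ^d}(0, 0)`. -/
def betaC (d : ℕ) : ℝ := greenZ d 0 0

/-- The eigenvalues `η_w = 2 ∑_i (1 − cos(2π w_i / n))` of the discrete Laplacian on the
torus `T_n^d`. -/
def eta (d n : ℕ) (w : Fin d → Fin n) : ℝ :=
  2 * ∑ i, (1 - Real.cos (2 * Real.pi * ((w i : ℕ) : ℝ) / n))

/-- The massive Green's function `G_{n,m²}(x,y)` on the torus `T_n^d`. -/
def torusGreen (d n : ℕ) (m2 : ℝ) (x y : Fin d → ZMod n) : ℝ :=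
  (1 / (n : ℝ) ^ d) * ∑ w : Fin d → Fin n,
    Real.cos (2 * Real.pi * (∑ i, ((w i : ℕ) : ℝ) * ((x i - y i).val : ℝ)) / n) /
      (m2 + eta d n w)

/-- The zero-average Green's function `G_n^0(x,y)` on the torus `T_n^d` (`d ≥ 3`). -/
def torusGreen0 (d n : ℕ) (x y : Fin d → ZMod n) : ℝ :=
  (1 / (n : ℝ) ^ d) *
    ∑ w ∈ Finset.univ.filter (fun w : Fin d → Fin n => ∃ i, (w i : ℕ) ≠ 0),
      Real.cos (2 * Real.pi * (∑ i, ((w i : ℕ) : ℝ) * ((x i - y i).val : ℝ)) / n) / eta d n w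

/-!
The integrand is singular exactly at `ℤ^d`, where it blows up at most like `δ⁻²`, with `δ` the
sup-norm distance to `ℤ^d`; since `δ(t) ≥ ‖tᵢ‖` on the circle for every `i`, `δ⁻²` is at most
`∏ᵢ ‖tᵢ‖^(-2/d)`, which is integrable over the cube for `d > 2`. The punctured Riemann sum is the
integral of a step function whose value at `t` is read off at a corner `k / n` of the cell of `t`.
A nonzero `n`-torsion point of the torus has norm at least `1 / n`, which is also the diameter of a
cell, so `δ(t) ≤ 2 δ(k / n)` and the step functions are dominated by a multiple of `δ⁻²`. Dominated
convergence concludes.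
-/

section UnitAddCircle

theorem norm_coe_unitAddCircle_of_mem_Ico {x : ℝ} (hx : x ∈ Set.Ico (0 : ℝ) 1) :
    ‖(x : UnitAddCircle)‖ = min x (1 - x) := by
  rw [UnitAddCircle.norm_eq, abs_sub_round_eq_min, Int.fract_eq_self.2 hx]

theorem norm_coe_unitAddCircle_pos {x : ℝ} (hx : x ∈ Set.Ioo (0 : ℝ) 1) :
    0 < ‖(x : UnitAddCircle)‖ := by
  rw [norm_coe_unitAddCircle_of_mem_Ico (Set.Ioo_subset_Ico_self hx)]
  exact lt_min hx.1 (sub_pos.2 hx.2)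

theorem one_div_le_norm_of_nsmul_eq_zero {n : ℕ} (hn : 0 < n) {u : UnitAddCircle} (hu : u ≠ 0)
    (hnu : n • u = 0) : 1 / (n : ℝ) ≤ ‖u‖ := by
  have horder : (1 : ℝ) ≤ addOrderOf u * ‖u‖ := by
    simpa using AddCircle.le_add_order_smul_norm_of_isOfFinAddOrder
      (isOfFinAddOrder_iff_nsmul_eq_zero.2 ⟨n, hn, hnu⟩) hu
  rw [div_le_iff₀' (Nat.cast_pos.2 hn)]
  refine horder.trans ?_
  gcongr
  exact addOrderOf_le_of_nsmul_eq_zero hn hnu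

theorem eight_mul_norm_coe_unitAddCircle_sq_le (x : ℝ) :
    8 * ‖(x : UnitAddCircle)‖ ^ 2 ≤ 1 - Real.cos (2 * Real.pi * x) := by
  have hle : |2 * Real.pi * (x - round x)| ≤ Real.pi := by
    rw [abs_mul, abs_of_pos Real.two_pi_pos]
    nlinarith [abs_sub_round x, Real.pi_pos]
  have hperiod : Real.cos (2 * Real.pi * (x - round x)) = Real.cos (2 * Real.pi * x) := by
    rw [← Real.cos_sub_int_mul_two_pi (2 * Real.pi * x) (round x)]
    ring_nf
  have hquad := Real.cos_le_one_sub_mul_cos_sq hle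
  rw [hperiod] at hquad
  have hcoeff : 2 / Real.pi ^ 2 * (2 * Real.pi * (x - round x)) ^ 2 = 8 * (x - round x) ^ 2 := by
    field_simp
    ring
  rw [UnitAddCircle.norm_eq, sq_abs]
  linarith

theorem integrableOn_norm_coe_unitAddCircle_rpow_neg {s : ℝ} (hs : s < 1) :
    IntegrableOn (fun x : ℝ => ‖(x : UnitAddCircle)‖ ^ (-s)) (Set.Ioo 0 1) := by
  have hleft : IntervalIntegrable (fun x : ℝ => x ^ (-s)) volume 0 1 :=
    intervalIntegral.intervalIntegrable_rpow' (neg_lt_neg hs)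
  have hright : IntervalIntegrable (fun x : ℝ => (1 - x) ^ (-s)) volume 0 1 := by
    simpa using (hleft.comp_sub_left 1).symm
  have hsum := (intervalIntegrable_iff_integrableOn_Ioo_of_le zero_le_one).1 (hleft.add hright)
  refine hsum.mono' ?_ ?_
  · exact ((AddCircle.continuous_mk' (1 : ℝ)).norm.measurable.pow_const _).aestronglyMeasurable
  · filter_upwards [ae_restrict_mem measurableSet_Ioo] with x hx
    have hx' : 0 ≤ 1 - x := sub_nonneg.2 hx.2.le
    rw [Real.norm_of_nonneg (by positivity),
      norm_coe_unitAddCircle_of_mem_Ico (Set.Ioo_subset_Ico_self hx)]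
    rcases min_choice x (1 - x) with h | h <;> rw [h]
    · exact le_add_of_nonneg_right (Real.rpow_nonneg hx' _)
    · exact le_add_of_nonneg_left (Real.rpow_nonneg hx.1.le _)

end UnitAddCircle

section UnitCube

/-- The half-open unit cube `[0, 1)^ι`, a fundamental domain of the lattice `ℤ^ι`. -/
abbrev unitCube (ι : Type*) : Set (ι → ℝ) := Set.univ.pi fun _ => Set.Ico 0 1

/-- The open unit cube `(0, 1)^ι`, the domain of integration. -/
abbrev openUnitCube (ι : Type*) : Set (ι → ℝ) := Set.univ.pi fun _ => Set.Ioo 0 1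

variable {ι : Type*}

theorem openUnitCube_subset_unitCube : openUnitCube ι ⊆ unitCube ι :=
  Set.pi_mono fun _ _ => Set.Ioo_subset_Ico_self

theorem ne_zero_of_mem_openUnitCube [Nonempty ι] {t : ι → ℝ} (ht : t ∈ openUnitCube ι) : t ≠ 0 :=
  Function.ne_iff.2 ⟨Classical.arbitrary ι, (ht _ trivial).1.ne'⟩

theorem isOpen_openUnitCube [Finite ι] : IsOpen (openUnitCube ι) :=
  isOpen_set_pi Set.finite_univ fun _ _ => isOpen_Ioo

theorem openUnitCube_ae_eq_unitCube [Fintype ι] : openUnitCube ι =ᵐ[volume] unitCube ι :=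
  Measure.ae_eq_set_pi fun _ _ => Ioo_ae_eq_Ico

end UnitCube

section LatticeDist

variable {ι : Type*} [Fintype ι]

/-- The sup-norm distance from `t` to the lattice `ℤ^ι`, encoded as the norm of the class of `t`
in the torus `(ℝ / ℤ)^ι`. -/
def latticeDist (t : ι → ℝ) : ℝ := ‖fun i => (t i : UnitAddCircle)‖

theorem latticeDist_nonneg (t : ι → ℝ) : 0 ≤ latticeDist t := norm_nonneg _

theorem continuous_latticeDist : Continuous (latticeDist : (ι → ℝ) → ℝ) :=
  (continuous_pi fun i => (AddCircle.continuous_mk' 1).comp (continuous_apply i)).norm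

theorem norm_coe_le_latticeDist (t : ι → ℝ) (i : ι) :
    ‖(t i : UnitAddCircle)‖ ≤ latticeDist t :=
  norm_le_pi_norm (fun i => (t i : UnitAddCircle)) i

theorem latticeDist_le_norm_sub_add (s t : ι → ℝ) :
    latticeDist s ≤ ‖s - t‖ + latticeDist t := by
  refine (pi_norm_le_iff_of_nonneg (add_nonneg (norm_nonneg _) (latticeDist_nonneg t))).2
    fun i => ?_
  calc ‖(s i : UnitAddCircle)‖
      = ‖((s i - t i : ℝ) : UnitAddCircle) + (t i : UnitAddCircle)‖ := by
        rw [← AddCircle.coe_add, sub_add_cancel]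
    _ ≤ ‖((s i - t i : ℝ) : UnitAddCircle)‖ + ‖(t i : UnitAddCircle)‖ := norm_add_le _ _
    _ ≤ ‖s - t‖ + latticeDist t :=
        add_le_add (QuotientAddGroup.norm_mk_le_norm.trans (norm_le_pi_norm (s - t) i))
          (norm_coe_le_latticeDist t i)

theorem latticeDist_pos {t : ι → ℝ} (ht : t ∈ unitCube ι) (ht0 : t ≠ 0) : 0 < latticeDist t := by
  obtain ⟨i, hi⟩ := Function.ne_iff.1 ht0
  obtain ⟨hlo, hhi⟩ := ht i trivial
  exact (norm_coe_unitAddCircle_pos ⟨hlo.lt_of_ne' hi, hhi⟩).trans_le (norm_coe_le_latticeDist t i)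

end LatticeDist

section Integrability

variable {ι : Type*} [Fintype ι] [Nonempty ι] {p : ℝ}

theorem latticeDist_rpow_neg_le_prod (hp : 0 ≤ p) {t : ι → ℝ}
    (ht : ∀ i, 0 < ‖(t i : UnitAddCircle)‖) :
    latticeDist t ^ (-p) ≤ ∏ i, ‖(t i : UnitAddCircle)‖ ^ (-(p / Fintype.card ι)) := by
  have hcard : (Fintype.card ι : ℝ) ≠ 0 := Nat.cast_ne_zero.2 Fintype.card_ne_zero
  calc latticeDist t ^ (-p)
      = ∏ _i : ι, latticeDist t ^ (-(p / Fintype.card ι)) := by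
        rw [Finset.prod_const, Finset.card_univ, ← Real.rpow_mul_natCast (latticeDist_nonneg t),
          neg_mul, div_mul_cancel₀ p hcard]
    _ ≤ ∏ i, ‖(t i : UnitAddCircle)‖ ^ (-(p / Fintype.card ι)) :=
        Finset.prod_le_prod (fun _ _ => Real.rpow_nonneg (latticeDist_nonneg t) _) fun i _ =>
          Real.rpow_le_rpow_of_nonpos (ht i) (norm_coe_le_latticeDist t i)
            (neg_nonpos.2 (by positivity))

theorem integrableOn_latticeDist_rpow_neg (hp : 0 ≤ p) (hpι : p < Fintype.card ι) :
    IntegrableOn (fun t : ι → ℝ => latticeDist t ^ (-p)) (openUnitCube ι) := by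
  have hprod : IntegrableOn
      (fun t : ι → ℝ => ∏ i, ‖(t i : UnitAddCircle)‖ ^ (-(p / Fintype.card ι)))
      (openUnitCube ι) := by
    rw [IntegrableOn, volume_pi, Measure.restrict_pi_pi]
    refine Integrable.fintype_prod
      (f := fun _ (x : ℝ) => ‖(x : UnitAddCircle)‖ ^ (-(p / Fintype.card ι))) fun _ =>
      integrableOn_norm_coe_unitAddCircle_rpow_neg ?_
    exact (div_lt_one (hp.trans_lt hpι)).2 hpι
  refine hprod.mono' (continuous_latticeDist.measurable.pow_const _).aestronglyMeasurable ?_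
  filter_upwards [ae_restrict_mem isOpen_openUnitCube.measurableSet] with t ht
  rw [Real.norm_of_nonneg (Real.rpow_nonneg (latticeDist_nonneg t) _)]
  exact latticeDist_rpow_neg_le_prod hp fun i => norm_coe_unitAddCircle_pos (ht i trivial)

end Integrability

section Grid

variable {ι : Type*} {n : ℕ}

/-- The point `k / n` of the lattice of mesh `1 / n`. -/
def gridPoint (n : ℕ) (k : ι → ℤ) : ι → ℝ := fun i => k i / n

/-- The index `k` of the cell `∏ᵢ [kᵢ / n, (kᵢ + 1) / n)` that contains `t`. -/
def cellIndex (n : ℕ) (t : ι → ℝ) : ι → ℤ := fun i => ⌊n * t i⌋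

theorem preimage_cellIndex_singleton (hn : 0 < n) (k : ι → ℤ) :
    cellIndex n ⁻¹' {k} =
      (Set.univ : Set ι).pi fun i => Set.Ico ((k i : ℝ) / n) (((k i : ℝ) + 1) / n) := by
  have hn' : (0 : ℝ) < n := Nat.cast_pos.2 hn
  ext t
  simp only [cellIndex, Set.mem_preimage, Set.mem_singleton_iff, funext_iff, Int.floor_eq_iff,
    Set.mem_univ_pi, Set.mem_Ico, div_le_iff₀' hn', lt_div_iff₀' hn']

theorem unitCube_eq_iUnion_preimage_cellIndex (hn : 0 < n) :
    unitCube ι = ⋃ w : ι → Fin n, cellIndex n ⁻¹' {fun i => ((w i : ℕ) : ℤ)} := by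
  have hn' : (0 : ℝ) < n := Nat.cast_pos.2 hn
  have floor_mem (x : ℝ) : x ∈ Set.Ico (0 : ℝ) 1 ↔ ⌊n * x⌋ ∈ Set.Ico (0 : ℤ) n := by
    rw [Set.mem_Ico, Set.mem_Ico, Int.floor_nonneg, Int.floor_lt, Int.cast_natCast,
      mul_nonneg_iff_of_pos_left hn', mul_lt_iff_lt_one_right hn']
  ext t
  simp only [Set.mem_univ_pi, floor_mem, Set.mem_iUnion, Set.mem_preimage, Set.mem_singleton_iff]
  constructor
  · intro h
    refine ⟨fun i => ⟨⌊n * t i⌋.toNat, (Int.toNat_lt (h i).1).2 (h i).2⟩, funext fun i => ?_⟩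
    exact (Int.toNat_of_nonneg (h i).1).symm
  · rintro ⟨w, hw⟩ i
    have hi : ⌊n * t i⌋ = ((w i : ℕ) : ℤ) := congrFun hw i
    rw [hi]
    exact ⟨Int.natCast_nonneg _, Int.ofNat_lt.2 (w i).2⟩

theorem gridPoint_cellIndex_mem_unitCube (hn : 0 < n) {t : ι → ℝ} (ht : t ∈ unitCube ι) :
    gridPoint n (cellIndex n t) ∈ unitCube ι := by
  rw [unitCube_eq_iUnion_preimage_cellIndex hn] at ht
  obtain ⟨w, hw⟩ := Set.mem_iUnion.1 ht
  have hw : cellIndex n t = fun i => ((w i : ℕ) : ℤ) := hw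
  have hn' : (0 : ℝ) < n := Nat.cast_pos.2 hn
  intro i _
  rw [hw, gridPoint, Int.cast_natCast, Set.mem_Ico, div_lt_one hn']
  exact ⟨by positivity, Nat.cast_lt.2 (w i).2⟩

theorem gridPoint_ne_zero (hn : 0 < n) {k : ι → ℤ} (hk : k ≠ 0) : gridPoint n k ≠ 0 := by
  obtain ⟨i, hi⟩ := Function.ne_iff.1 hk
  exact Function.ne_iff.2
    ⟨i, div_ne_zero (Int.cast_ne_zero.2 hi) (Nat.cast_ne_zero.2 hn.ne')⟩

theorem measurable_cellIndex : Measurable (cellIndex n : (ι → ℝ) → ι → ℤ) :=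
  measurable_pi_lambda _ fun i => Int.measurable_floor.comp ((measurable_pi_apply i).const_mul _)

theorem stronglyMeasurable_comp_cellIndex [Finite ι] {E : Type*} [TopologicalSpace E]
    (f : (ι → ℤ) → E) : StronglyMeasurable fun t : ι → ℝ => f (cellIndex n t) :=
  StronglyMeasurable.of_discrete.comp_measurable measurable_cellIndex

theorem abs_sub_gridPoint_cellIndex_le (hn : 0 < n) (t : ι → ℝ) (i : ι) :
    |t i - gridPoint n (cellIndex n t) i| ≤ 1 / n := by
  have hmem : t ∈ cellIndex n ⁻¹' {cellIndex n t} := rfl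
  rw [preimage_cellIndex_singleton hn] at hmem
  obtain ⟨hlo, hhi⟩ := hmem i trivial
  rw [gridPoint, abs_of_nonneg (sub_nonneg.2 hlo), sub_le_iff_le_add', ← add_div]
  exact hhi.le

theorem tendsto_gridPoint_cellIndex (t : ι → ℝ) :
    Tendsto (fun n : ℕ => gridPoint n (cellIndex n t)) atTop (𝓝 t) := by
  refine tendsto_pi_nhds.2 fun i => tendsto_iff_norm_sub_tendsto_zero.2 <|
    squeeze_zero' (.of_forall fun _ => norm_nonneg _) ?_ tendsto_one_div_atTop_nhds_zero_nat
  filter_upwards [eventually_gt_atTop 0] with n hn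
  rw [norm_sub_rev]
  exact abs_sub_gridPoint_cellIndex_le hn t i

variable [Fintype ι]

theorem volume_real_preimage_cellIndex_singleton (hn : 0 < n) (k : ι → ℤ) :
    volume.real (cellIndex n ⁻¹' {k}) = 1 / (n : ℝ) ^ Fintype.card ι := by
  have hle : (fun i => (k i : ℝ) / n) ≤ fun i => ((k i : ℝ) + 1) / n := fun i => by
    dsimp only
    gcongr
    exact le_add_of_nonneg_right zero_le_one
  rw [preimage_cellIndex_singleton hn, Measure.real, Real.volume_pi_Ico_toReal hle]
  simp [← sub_div]

theorem setIntegral_comp_cellIndex [DecidableEq ι] {E : Type*} [NormedAddCommGroup E]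
    [NormedSpace ℝ E] [CompleteSpace E] (hn : 0 < n) (f : (ι → ℤ) → E) :
    ∫ t in unitCube ι, f (cellIndex n t) =
      (1 / (n : ℝ) ^ Fintype.card ι) • ∑ w : ι → Fin n, f fun i => ((w i : ℕ) : ℤ) := by
  have hmeas (k : ι → ℤ) : MeasurableSet (cellIndex n ⁻¹' {k}) :=
    measurable_cellIndex (measurableSet_singleton k)
  have hconst (k : ι → ℤ) :
      Set.EqOn (fun t => f (cellIndex n t)) (fun _ => f k) (cellIndex n ⁻¹' {k}) :=
    fun t ht => congrArg f ht
  have hfinite (k : ι → ℤ) : volume (cellIndex n ⁻¹' {k}) ≠ ⊤ := by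
    rw [preimage_cellIndex_singleton hn, Real.volume_pi_Ico]
    exact ENNReal.prod_ne_top fun _ _ => ENNReal.ofReal_ne_top
  have hcast : Function.Injective fun (w : ι → Fin n) i => ((w i : ℕ) : ℤ) := fun v w h =>
    funext fun i => Fin.ext (Int.ofNat_inj.1 (congrFun h i))
  rw [unitCube_eq_iUnion_preimage_cellIndex hn, integral_iUnion_fintype (fun _ => hmeas _)
    (fun v w hvw => (Set.disjoint_singleton.2 (hcast.ne hvw)).preimage _)
    fun w => (integrableOn_const (hfinite _)).congr_fun (hconst _).symm (hmeas _), Finset.smul_sum]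
  refine Finset.sum_congr rfl fun w _ => ?_
  rw [setIntegral_congr_fun (hmeas _) (hconst _), setIntegral_const,
    volume_real_preimage_cellIndex_singleton hn]

theorem norm_sub_gridPoint_cellIndex_le (hn : 0 < n) (t : ι → ℝ) :
    ‖t - gridPoint n (cellIndex n t)‖ ≤ 1 / n :=
  (pi_norm_le_iff_of_nonneg (by positivity)).2 (abs_sub_gridPoint_cellIndex_le hn t)

theorem one_div_le_latticeDist_gridPoint (hn : 0 < n) {k : ι → ℤ}
    (hk : 0 < latticeDist (gridPoint n k)) : 1 / (n : ℝ) ≤ latticeDist (gridPoint n k) := by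
  obtain ⟨i, hi⟩ := Function.ne_iff.1 (norm_pos_iff.1 hk)
  refine (one_div_le_norm_of_nsmul_eq_zero hn hi ?_).trans (norm_coe_le_latticeDist _ i)
  rw [← AddCircle.coe_nsmul, AddCircle.coe_eq_zero_iff]
  refine ⟨k i, ?_⟩
  rw [gridPoint, zsmul_one, nsmul_eq_mul, mul_div_cancel₀ _ (Nat.cast_ne_zero.2 hn.ne')]

theorem latticeDist_le_two_mul_latticeDist_gridPoint (hn : 0 < n) {t : ι → ℝ}
    (ht : 0 < latticeDist (gridPoint n (cellIndex n t))) :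
    latticeDist t ≤ 2 * latticeDist (gridPoint n (cellIndex n t)) := by
  have htriangle := latticeDist_le_norm_sub_add t (gridPoint n (cellIndex n t))
  have hcell := norm_sub_gridPoint_cellIndex_le hn t
  have hgap := one_div_le_latticeDist_gridPoint hn ht
  linarith

end Grid

section PuncturedRiemannSum

variable {ι : Type*} {E : Type*} [NormedAddCommGroup E] {n : ℕ} {g : (ι → ℝ) → E} {C p : ℝ}

/-- The values of `g` on the grid of mesh `1 / n`, with the value at the origin, where `g` may be
singular, replaced by `0`. -/
def puncturedSample (g : (ι → ℝ) → E) (n : ℕ) : (ι → ℤ) → E :=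
  ({0}ᶜ : Set (ι → ℤ)).indicator fun k => g (gridPoint n k)

theorem tendsto_puncturedSample_cellIndex {t : ι → ℝ} (ht : t ≠ 0) (hg : ContinuousAt g t) :
    Tendsto (fun n => puncturedSample g n (cellIndex n t)) atTop (𝓝 (g t)) := by
  have hgrid := tendsto_gridPoint_cellIndex t
  refine (hg.tendsto.comp hgrid).congr' ?_
  filter_upwards [hgrid.eventually_ne ht] with n hn
  have hk : cellIndex n t ≠ 0 := fun hk => hn (by ext; simp [gridPoint, hk])
  rw [puncturedSample, Set.indicator_of_mem (by simpa using hk), Function.comp_apply]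

variable [Fintype ι]

theorem sum_puncturedSample [DecidableEq ι] (g : (ι → ℝ) → E) (n : ℕ) :
    ∑ w : ι → Fin n, puncturedSample g n (fun i => ((w i : ℕ) : ℤ)) =
      ∑ w ∈ Finset.univ.filter (fun w : ι → Fin n => ∃ i, (w i : ℕ) ≠ 0),
        g fun i => ((w i : ℕ) : ℝ) / n := by
  rw [Finset.sum_filter]
  refine Finset.sum_congr rfl fun w _ => ?_
  unfold puncturedSample gridPoint
  simp [Set.indicator_apply, Function.ne_iff]

theorem norm_puncturedSample_cellIndex_le [Nonempty ι] (hn : 0 < n) (hp : 0 ≤ p)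
    (hg : ∀ t ∈ unitCube ι, t ≠ 0 → ‖g t‖ ≤ C * latticeDist t ^ (-p))
    {t : ι → ℝ} (ht : t ∈ openUnitCube ι) :
    ‖puncturedSample g n (cellIndex n t)‖ ≤ C * 2 ^ p * latticeDist t ^ (-p) := by
  have htcube := openUnitCube_subset_unitCube ht
  have ht0 := ne_zero_of_mem_openUnitCube ht
  have htpos := latticeDist_pos htcube ht0
  have hC : 0 ≤ C := nonneg_of_mul_nonneg_left ((norm_nonneg _).trans (hg t htcube ht0))
    (Real.rpow_pos_of_pos htpos _)
  by_cases hk : cellIndex n t = 0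
  · rw [puncturedSample, Set.indicator_of_notMem (by simpa using hk), norm_zero]
    positivity
  · have hgrid := gridPoint_cellIndex_mem_unitCube hn htcube
    have hgrid0 : gridPoint n (cellIndex n t) ≠ 0 := gridPoint_ne_zero hn hk
    have hgridpos := latticeDist_pos hgrid hgrid0
    have hhalf : latticeDist t / 2 ≤ latticeDist (gridPoint n (cellIndex n t)) :=
      (div_le_iff₀' two_pos).2 (latticeDist_le_two_mul_latticeDist_gridPoint hn hgridpos)
    rw [puncturedSample, Set.indicator_of_mem (by simpa using hk)]
    calc ‖g (gridPoint n (cellIndex n t))‖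
        ≤ C * latticeDist (gridPoint n (cellIndex n t)) ^ (-p) := hg _ hgrid hgrid0
      _ ≤ C * (latticeDist t / 2) ^ (-p) := by
          gcongr 1
          exact Real.rpow_le_rpow_of_nonpos (half_pos htpos) hhalf (neg_nonpos.2 hp)
      _ = C * 2 ^ p * latticeDist t ^ (-p) := by
          rw [Real.div_rpow htpos.le zero_le_two, Real.rpow_neg zero_le_two, div_inv_eq_mul,
            mul_comm (_ ^ _), mul_assoc]

theorem integrableOn_of_norm_le_latticeDist_rpow [Nonempty ι] (hp : 0 ≤ p)
    (hpι : p < Fintype.card ι) (hcont : ContinuousOn g (openUnitCube ι))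
    (hg : ∀ t ∈ openUnitCube ι, ‖g t‖ ≤ C * latticeDist t ^ (-p)) :
    IntegrableOn g (openUnitCube ι) := by
  have hcube := (isOpen_openUnitCube (ι := ι)).measurableSet
  exact ((integrableOn_latticeDist_rpow_neg hp hpι).const_mul C).mono'
    (hcont.aestronglyMeasurable hcube) ((ae_restrict_mem hcube).mono hg)

theorem tendsto_puncturedRiemannSum [NormedSpace ℝ E] [CompleteSpace E] [DecidableEq ι] [Nonempty ι]
    (hp : 0 ≤ p) (hpι : p < Fintype.card ι) (hcont : ContinuousOn g (openUnitCube ι))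
    (hg : ∀ t ∈ unitCube ι, t ≠ 0 → ‖g t‖ ≤ C * latticeDist t ^ (-p)) :
    Tendsto
      (fun n : ℕ => (1 / (n : ℝ) ^ Fintype.card ι) •
        ∑ w ∈ Finset.univ.filter (fun w : ι → Fin n => ∃ i, (w i : ℕ) ≠ 0),
          g fun i => ((w i : ℕ) : ℝ) / n)
      atTop (𝓝 (∫ t in openUnitCube ι, g t)) := by
  have hmem := ae_restrict_mem (μ := volume) (isOpen_openUnitCube (ι := ι)).measurableSet
  refine (tendsto_integral_filter_of_dominated_convergence
    (F := fun n t => puncturedSample g n (cellIndex n t))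
    (fun t => C * 2 ^ p * latticeDist t ^ (-p)) ?_ ?_ ?_ ?_).congr' ?_
  · exact .of_forall fun n => (stronglyMeasurable_comp_cellIndex _).aestronglyMeasurable
  · filter_upwards [eventually_gt_atTop 0] with n hn
    filter_upwards [hmem] with t ht using norm_puncturedSample_cellIndex_le hn hp hg ht
  · exact (integrableOn_latticeDist_rpow_neg hp hpι).const_mul _
  · filter_upwards [hmem] with t ht
    exact tendsto_puncturedSample_cellIndex (ne_zero_of_mem_openUnitCube ht)
      (hcont.continuousAt (isOpen_openUnitCube.mem_nhds ht))
  · filter_upwards [eventually_gt_atTop 0] with n hn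
    rw [setIntegral_congr_set openUnitCube_ae_eq_unitCube, setIntegral_comp_cellIndex hn,
      sum_puncturedSample]

end PuncturedRiemannSum

section LaplaceSymbol

variable {ι : Type*} [Fintype ι]

/-- The Fourier symbol of the lattice Laplacian `-Δ` on `ℤ^ι`, whose values at the points `w / n`
are the eigenvalues of the Laplacian on the torus of side `n`. -/
def laplaceSymbol (t : ι → ℝ) : ℝ := 2 * ∑ i, (1 - Real.cos (2 * Real.pi * t i))

theorem laplaceSymbol_nonneg (t : ι → ℝ) : 0 ≤ laplaceSymbol t :=
  mul_nonneg zero_le_two (Finset.sum_nonneg fun _ _ => sub_nonneg.2 (Real.cos_le_one _))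

theorem sixteen_mul_latticeDist_sq_le_laplaceSymbol (t : ι → ℝ) :
    16 * latticeDist t ^ 2 ≤ laplaceSymbol t := by
  suffices latticeDist t ≤ √(laplaceSymbol t / 16) by
    have hsq := (Real.le_sqrt (latticeDist_nonneg t)
      (div_nonneg (laplaceSymbol_nonneg t) (by norm_num))).1 this
    linarith
  refine (pi_norm_le_iff_of_nonneg (Real.sqrt_nonneg _)).2 fun i => Real.le_sqrt_of_sq_le ?_
  have hi : 1 - Real.cos (2 * Real.pi * t i) ≤ ∑ j, (1 - Real.cos (2 * Real.pi * t j)) :=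
    Finset.single_le_sum (f := fun j => 1 - Real.cos (2 * Real.pi * t j))
      (fun j _ => sub_nonneg.2 (Real.cos_le_one _)) (Finset.mem_univ i)
  have hnorm := eight_mul_norm_coe_unitAddCircle_sq_le (t i)
  rw [laplaceSymbol]
  linarith

variable {m2 : ℝ} {t : ι → ℝ}

theorem add_laplaceSymbol_pos (hm2 : 0 ≤ m2) (ht : t ∈ unitCube ι) (ht0 : t ≠ 0) :
    0 < m2 + laplaceSymbol t := by
  have hdist := latticeDist_pos ht ht0
  have hsymbol := sixteen_mul_latticeDist_sq_le_laplaceSymbol t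
  exact add_pos_of_nonneg_of_pos hm2 (lt_of_lt_of_le (by positivity) hsymbol)

theorem norm_one_div_add_laplaceSymbol_le (hm2 : 0 ≤ m2) (ht : t ∈ unitCube ι) (ht0 : t ≠ 0) :
    ‖1 / (m2 + laplaceSymbol t)‖ ≤ 1 / 16 * latticeDist t ^ (-2 : ℝ) := by
  have hdist := latticeDist_pos ht ht0
  rw [Real.norm_of_nonneg (one_div_pos.2 (add_laplaceSymbol_pos hm2 ht ht0)).le,
    Real.rpow_neg hdist.le, Real.rpow_two, ← one_div, one_div_mul_one_div]
  exact one_div_le_one_div_of_le (by positivity)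
    ((sixteen_mul_latticeDist_sq_le_laplaceSymbol t).trans (le_add_of_nonneg_left hm2))

theorem continuousOn_one_div_add_laplaceSymbol [Nonempty ι] (hm2 : 0 ≤ m2) :
    ContinuousOn (fun t : ι → ℝ => 1 / (m2 + laplaceSymbol t)) (openUnitCube ι) := by
  have hcont : Continuous (laplaceSymbol : (ι → ℝ) → ℝ) := by
    unfold laplaceSymbol
    fun_prop
  refine continuousOn_const.div (continuous_const.add hcont).continuousOn fun t ht => ?_
  exact (add_laplaceSymbol_pos hm2 (openUnitCube_subset_unitCube ht)
    (ne_zero_of_mem_openUnitCube ht)).ne'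

end LaplaceSymbol

theorem eta_eq_laplaceSymbol (d n : ℕ) (w : Fin d → Fin n) :
    eta d n w = laplaceSymbol fun i => ((w i : ℕ) : ℝ) / n := by
  simp only [eta, laplaceSymbol, mul_div_assoc]

theorem betaC_eq_setIntegral_one_div_laplaceSymbol (d : ℕ) :
    betaC d = ∫ t in openUnitCube (Fin d), 1 / laplaceSymbol t := by
  have hcube : openUnitCube (Fin d) =ᵐ[volume] Set.Icc (0 : Fin d → ℝ) 1 :=
    Measure.univ_pi_Ioo_ae_eq_Icc (f := (0 : Fin d → ℝ)) (g := 1)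
  rw [setIntegral_congr_set hcube]
  simp [betaC, greenZ, massGreenZ, laplaceSymbol]

/-- For `d ≥ 3` and `m² ≥ 0`, the integral
`∫_{(0,1)^d} 1/(m² + 2∑(1 − cos 2πx_k)) dx` is finite, the Riemann sums
`n^{-d} ∑_{x ≠ 0} 1/(m² + η_x)` converge to it as `n → ∞`, and for `m² = 0` the limit
equals `β_c`. -/
theorem riemann_sum_green_tendsto (d : ℕ) (hd : 3 ≤ d) (m2 : ℝ) (hm2 : 0 ≤ m2) :
    IntegrableOn
      (fun t : Fin d → ℝ => 1 / (m2 + 2 * ∑ i, (1 - Real.cos (2 * Real.pi * t i))))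
      ((Set.univ : Set (Fin d)).pi fun _ => Set.Ioo (0 : ℝ) 1) volume ∧
    Tendsto
      (fun n : ℕ => (1 / (n : ℝ) ^ d) *
        ∑ w ∈ Finset.univ.filter (fun w : Fin d → Fin n => ∃ i, (w i : ℕ) ≠ 0),
          1 / (m2 + eta d n w))
      atTop
      (nhds (∫ t in (Set.univ : Set (Fin d)).pi fun _ => Set.Ioo (0 : ℝ) 1,
        1 / (m2 + 2 * ∑ i, (1 - Real.cos (2 * Real.pi * t i))))) ∧
    (m2 = 0 →
      (∫ t in (Set.univ : Set (Fin d)).pi fun _ => Set.Ioo (0 : ℝ) 1,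
        1 / (m2 + 2 * ∑ i, (1 - Real.cos (2 * Real.pi * t i)))) = betaC d) := by
  have : Nonempty (Fin d) := ⟨⟨0, by omega⟩⟩
  have hcard : (2 : ℝ) < Fintype.card (Fin d) := by
    rw [Fintype.card_fin]
    exact_mod_cast hd
  have hcont := continuousOn_one_div_add_laplaceSymbol (ι := Fin d) hm2
  have hbound (t : Fin d → ℝ) := norm_one_div_add_laplaceSymbol_le (t := t) hm2
  refine ⟨?_, ?_, ?_⟩
  · exact integrableOn_of_norm_le_latticeDist_rpow zero_le_two hcard hcont fun t ht =>
      hbound t (openUnitCube_subset_unitCube ht) (ne_zero_of_mem_openUnitCube ht)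
  · have hlim := tendsto_puncturedRiemannSum zero_le_two hcard hcont hbound
    simp only [Fintype.card_fin, smul_eq_mul, ← eta_eq_laplaceSymbol] at hlim
    convert hlim
    rfl
  · rintro rfl
    simp only [zero_add]
    exact (betaC_eq_setIntegral_one_div_laplaceSymbol d).symm

end
end

section
/- Let d ≥ 3, β > β_c, and for each n ≥ 3 let m_n² be the unique m² > 0 satisfying n^{−d} Σ_{w ∈ {0,…,n−1}^d} 1/(m² + η_w) = β. Then n^d·m_n² → 1/(β − β_c) as n → ∞, and for all x, y ∈ ℤ^d, G_{n,m_n²}(x̄, ȳ) → G_{ℤ^d}(x,y) + (β − β_c) as n → ∞. -/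
open MeasureTheory ProbabilityTheory Filter Topology Matrix
open scoped Classical ENNReal

noncomputable section

/-!
In the Fourier sum for `G_{n,m²}` the constant mode contributes `1 / (n ^ d * m²)`, and the other
modes form a Riemann sum of `cos (2π (x - y)·t) / (m² + η(t))` over the unit cube. As `m² → 0` this
Riemann sum converges to `G_{ℤ^d}(x, y)` by dominated convergence. A nonzero grid point has a
coordinate at distance at least `1 / n` from `ℤ`, so `η` there is at least a constant multiple of
`η` anywhere in the adjacent grid cell, and `1 / η` is therefore an integrable majorant up to a
constant. Its integrability follows from AM-GM, which bounds it by `∏ i, sin (π tᵢ) ^ (-2 / d)`,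
a product of integrable functions exactly when `d ≥ 3`.

The mass equation says that the constant mode makes up the difference between `β` and the nonzero
modes. The latter are at most their value at zero mass, which tends to `β_c < β`, so
`1 / (n ^ d * m_n²)` stays bounded below by a positive constant and `m_n² → 0`. Hence the nonzero
modes converge, and `1 / (n ^ d * m_n²) → β - β_c`.
-/

section RiemannSum

open Set

variable {ι : Type*}

/-- The lattice point of `n⁻¹ ℤ^ι` obtained by rounding each coordinate of `t` down. The floor is
taken in `ℕ`, so negative coordinates are sent to `0`. -/
def latticeFloor (n : ℕ) (t : ι → ℝ) : ι → ℝ := fun i => (⌊n * t i⌋₊ : ℝ) / n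

lemma tendsto_latticeFloor {t : ι → ℝ} (ht : 0 ≤ t) :
    Tendsto (fun n => latticeFloor n t) atTop (𝓝 t) := by
  refine tendsto_pi_nhds.2 fun i => ?_
  simpa [latticeFloor, Function.comp_def, mul_comm] using
    (tendsto_nat_floor_mul_div_atTop (ht i)).comp (tendsto_natCast_atTop_atTop (R := ℝ))

lemma abs_sub_latticeFloor_le {n : ℕ} (hn : n ≠ 0) {t : ι → ℝ} {i : ι} (ht : 0 ≤ t i) :
    |t i - latticeFloor n t i| ≤ 1 / n := by
  have hn' : (0 : ℝ) < n := by positivity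
  have hle := Nat.floor_le (mul_nonneg hn'.le ht)
  have hlt := (Nat.lt_floor_add_one (n * t i)).le
  rw [← div_le_iff₀' hn'] at hle
  rw [← le_div_iff₀' hn', add_div] at hlt
  rw [latticeFloor, abs_of_nonneg (sub_nonneg.2 hle)]
  linarith

lemma latticeFloor_mem_Ico {n : ℕ} {t : ι → ℝ} {i : ι} (ht : t i ∈ Ico 0 1) :
    latticeFloor n t i ∈ Ico 0 1 := by
  refine ⟨by unfold latticeFloor; positivity, lt_of_le_of_lt ?_ ht.2⟩
  exact div_le_of_le_mul₀ n.cast_nonneg ht.1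
    ((Nat.floor_le (mul_nonneg n.cast_nonneg ht.1)).trans_eq (mul_comm _ _))

lemma exists_latticeFloor_mem_Icc {n : ℕ} {t : ι → ℝ} (ht : ∀ i, t i ∈ Ico 0 1)
    (hne : latticeFloor n t ≠ 0) : ∃ j, latticeFloor n t j ∈ Icc (1 / (n : ℝ)) (1 - 1 / n) := by
  obtain ⟨j, hj⟩ := Function.ne_iff.1 hne
  obtain ⟨hfloor, hn⟩ : ⌊n * t j⌋₊ ≠ 0 ∧ n ≠ 0 := by
    simpa [latticeFloor, not_or] using hj
  have hn' : (0 : ℝ) < n := by positivity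
  have hlt : ⌊n * t j⌋₊ < n := by
    rw [Nat.floor_lt (mul_nonneg hn'.le (ht j).1)]
    exact mul_lt_of_lt_one_right hn' (ht j).2
  have hpos : (1 : ℝ) ≤ ⌊n * t j⌋₊ := by exact_mod_cast Nat.one_le_iff_ne_zero.2 hfloor
  have hlt' : (⌊n * t j⌋₊ : ℝ) + 1 ≤ n := by exact_mod_cast hlt
  refine ⟨j, div_le_div_of_nonneg_right hpos hn'.le, ?_⟩
  rw [latticeFloor, le_sub_iff_add_le, ← add_div]
  exact (div_le_one hn').2 hlt'

lemma stronglyMeasurable_comp_latticeFloor {β : Type*} [Finite ι] [TopologicalSpace β] (n : ℕ)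
    (f : (ι → ℝ) → β) : StronglyMeasurable fun t => f (latticeFloor n t) := by
  have hfloor : Measurable fun (t : ι → ℝ) (i : ι) => ⌊n * t i⌋₊ := by fun_prop
  exact (StronglyMeasurable.of_discrete
    (f := fun v : ι → ℕ => f fun i => (v i : ℝ) / n)).comp_measurable hfloor

variable [Fintype ι]

lemma ae_restrict_Icc_of_forall_Ioo {p : (ι → ℝ) → Prop}
    (h : ∀ t : ι → ℝ, (∀ i, t i ∈ Ioo 0 1) → p t) :
    ∀ᵐ t ∂volume.restrict (Icc (0 : ι → ℝ) 1), p t := by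
  have hcube : univ.pi (fun _ : ι => Ioo (0 : ℝ) 1) =ᵐ[volume] Icc (0 : ι → ℝ) 1 :=
    Measure.univ_pi_Ioo_ae_eq_Icc
  rw [← Measure.restrict_congr_set hcube]
  filter_upwards [ae_restrict_mem (MeasurableSet.univ_pi fun _ => measurableSet_Ioo)] with t ht
  exact h t fun i => ht i (mem_univ i)

/-- The Riemann sum of `f` over the unit cube, for the subdivision into cubes of side `1 / n`
tagged at their lowest corners. -/
def riemannSum {E : Type*} [AddCommGroup E] [Module ℝ E] (n : ℕ) (f : (ι → ℝ) → E) : E :=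
  ((n : ℝ) ^ Fintype.card ι)⁻¹ • ∑ w : ι → Fin n, f fun i => ((w i : ℕ) : ℝ) / n

lemma ofNat_floor_eq_and_mem_Ico_iff {n : ℕ} [NeZero n] {k : Fin n} {t : ℝ} :
    Fin.ofNat n ⌊n * t⌋₊ = k ∧ t ∈ Ico 0 1 ↔ t ∈ Ico ((k : ℕ) / n : ℝ) (((k : ℕ) + 1) / n) := by
  have hn : (0 : ℝ) < n := mod_cast NeZero.pos n
  have hk : ((k : ℕ) : ℝ) + 1 ≤ n := by exact_mod_cast k.2
  rw [Fin.ext_iff, Fin.val_ofNat, mem_Ico, mem_Ico, div_le_iff₀' hn, lt_div_iff₀' hn]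
  constructor
  · rintro ⟨hfloor, h0, h1⟩
    have hnt : 0 ≤ n * t := mul_nonneg hn.le h0
    have hlt : ⌊n * t⌋₊ < n := (Nat.floor_lt hnt).2 (mul_lt_of_lt_one_right hn h1)
    rwa [Nat.mod_eq_of_lt hlt, Nat.floor_eq_iff hnt] at hfloor
  · rintro ⟨hle, hlt⟩
    have hnt : 0 ≤ n * t := (Nat.cast_nonneg _).trans hle
    rw [(Nat.floor_eq_iff hnt).2 ⟨hle, hlt⟩, Nat.mod_eq_of_lt k.2]
    exact ⟨rfl, nonneg_of_mul_nonneg_right hnt hn, by nlinarith⟩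

lemma volume_real_restrict_ofNat_floor_preimage {n : ℕ} [NeZero n] (w : ι → Fin n) :
    (volume.restrict (univ.pi fun _ : ι => Ico (0 : ℝ) 1)).real
      ((fun t i => Fin.ofNat n ⌊n * t i⌋₊) ⁻¹' {w}) = ((n : ℝ) ^ Fintype.card ι)⁻¹ := by
  have hcell : (fun (t : ι → ℝ) i => Fin.ofNat n ⌊n * t i⌋₊) ⁻¹' {w} ∩
      univ.pi (fun _ => Ico (0 : ℝ) 1) =
      univ.pi fun i => Ico (((w i : ℕ) : ℝ) / n) (((w i : ℕ) + 1) / n) := by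
    ext t
    simp only [mem_inter_iff, mem_preimage, mem_singleton_iff, mem_univ_pi, funext_iff,
      ← ofNat_floor_eq_and_mem_Ico_iff, forall_and]
  have hle : (fun i => ((w i : ℕ) : ℝ) / n) ≤ fun i => (((w i : ℕ) : ℝ) + 1) / n := fun i => by
    dsimp only
    gcongr
    linarith
  rw [measureReal_restrict_apply' (MeasurableSet.univ_pi fun _ => measurableSet_Ico), hcell,
    Measure.real, Real.volume_pi_Ico_toReal hle]
  simp [← sub_div]

variable {E : Type*} [NormedAddCommGroup E] [NormedSpace ℝ E] [CompleteSpace E]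

lemma riemannSum_eq_setIntegral {n : ℕ} (hn : n ≠ 0) (f : (ι → ℝ) → E) :
    riemannSum n f = ∫ t in Icc (0 : ι → ℝ) 1, f (latticeFloor n t) := by
  have : NeZero n := ⟨hn⟩
  let cell : (ι → ℝ) → ι → Fin n := fun t i => Fin.ofNat n ⌊n * t i⌋₊
  let F : (ι → Fin n) → E := fun w => f fun i => ((w i : ℕ) : ℝ) / n
  have hcell : Measurable cell := measurable_pi_lambda _ fun i =>
    (Measurable.of_discrete (f := Fin.ofNat n)).comp
      (by fun_prop : Measurable fun t : ι → ℝ => ⌊n * t i⌋₊)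
  have hF : ∀ t ∈ univ.pi fun _ : ι => Ico (0 : ℝ) 1, F (cell t) = f (latticeFloor n t) := by
    intro t ht
    have hlt : ∀ i, ⌊n * t i⌋₊ < n := fun i => by
      have hti := ht i (mem_univ i)
      rw [Nat.floor_lt (mul_nonneg n.cast_nonneg hti.1)]
      exact mul_lt_of_lt_one_right (by positivity) hti.2
    simp only [F, cell, Fin.val_ofNat, Nat.mod_eq_of_lt (hlt _)]
    rfl
  have hcube : univ.pi (fun _ : ι => Ico (0 : ℝ) 1) =ᵐ[volume] Icc (0 : ι → ℝ) 1 :=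
    Measure.univ_pi_Ico_ae_eq_Icc
  set μ : Measure (ι → ℝ) := volume.restrict (univ.pi fun _ => Ico 0 1) with hμ
  have : IsFiniteMeasure μ := by
    rw [hμ, Measure.restrict_congr_set hcube]
    exact isFiniteMeasure_restrict.2 isCompact_Icc.measure_lt_top.ne
  calc riemannSum n f = ∑ w, (μ.map cell).real {w} • F w := by
        simp_rw [riemannSum, Finset.smul_sum,
          map_measureReal_apply hcell (measurableSet_singleton _), hμ, cell,
          volume_real_restrict_ofNat_floor_preimage, F]
    _ = ∫ w, F w ∂μ.map cell := (integral_fintype .of_finite).symm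
    _ = ∫ t, F (cell t) ∂μ := integral_map hcell.aemeasurable .of_discrete
    _ = ∫ t in univ.pi fun _ => Ico 0 1, f (latticeFloor n t) :=
        setIntegral_congr_fun (MeasurableSet.univ_pi fun _ => measurableSet_Ico) hF
    _ = ∫ t in Icc (0 : ι → ℝ) 1, f (latticeFloor n t) := setIntegral_congr_set hcube

lemma tendsto_riemannSum_of_dominated {f : ℕ → (ι → ℝ) → E} {g : (ι → ℝ) → E}
    (bound : (ι → ℝ) → ℝ) (bound_integrable : IntegrableOn bound (Icc 0 1))
    (h_bound : ∀ᶠ n in atTop, ∀ t : ι → ℝ, (∀ i, t i ∈ Ioo 0 1) →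
      ‖f n (latticeFloor n t)‖ ≤ bound t)
    (h_lim : ∀ t : ι → ℝ, (∀ i, t i ∈ Ioo 0 1) →
      Tendsto (fun p : ℕ × (ι → ℝ) => f p.1 p.2) (atTop ×ˢ 𝓝 t) (𝓝 (g t))) :
    Tendsto (fun n => riemannSum n (f n)) atTop (𝓝 (∫ t in Icc (0 : ι → ℝ) 1, g t)) := by
  have h_int : Tendsto (fun n => ∫ t in Icc (0 : ι → ℝ) 1, f n (latticeFloor n t)) atTop
      (𝓝 (∫ t in Icc (0 : ι → ℝ) 1, g t)) := by
    refine tendsto_integral_filter_of_dominated_convergence bound ?meas ?dom bound_integrable ?lim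
    case meas =>
      exact .of_forall fun n => (stronglyMeasurable_comp_latticeFloor n _).aestronglyMeasurable
    case dom => exact h_bound.mono fun n hn => ae_restrict_Icc_of_forall_Ioo hn
    case lim =>
      refine ae_restrict_Icc_of_forall_Ioo fun t ht => ?_
      exact (h_lim t ht).comp (tendsto_id.prodMk (tendsto_latticeFloor fun i => (ht i).1.le))
  refine h_int.congr' ?_
  filter_upwards [eventually_ne_atTop 0] with n hn
  exact (riemannSum_eq_setIntegral hn _).symm

end RiemannSum

section RiemannSumAlgebra

variable {ι : Type*} [Fintype ι]

lemma riemannSum_mono {n : ℕ} {f g : (ι → ℝ) → ℝ}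
    (hfg : ∀ s : ι → ℝ, (∀ i, s i ∈ Set.Ico 0 1) → f s ≤ g s) :
    riemannSum n f ≤ riemannSum n g := by
  refine mul_le_mul_of_nonneg_left (Finset.sum_le_sum fun w _ => hfg _ fun i => ?_) (by positivity)
  have hlt : ((w i : ℕ) : ℝ) < n := by exact_mod_cast (w i).2
  exact ⟨by positivity, (div_lt_one ((Nat.cast_nonneg _).trans_lt hlt)).2 hlt⟩

variable {E : Type*} [AddCommGroup E] [Module ℝ E]

lemma riemannSum_eq_add_indicator_compl {n : ℕ} (hn : n ≠ 0) (f : (ι → ℝ) → E) :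
    riemannSum n f =
      ((n : ℝ) ^ Fintype.card ι)⁻¹ • f 0 + riemannSum n (({0}ᶜ : Set (ι → ℝ)).indicator f) := by
  have : NeZero n := ⟨hn⟩
  have hzero : ∑ w : ι → Fin n, ({0} : Set (ι → ℝ)).indicator f (fun i => ((w i : ℕ) : ℝ) / n) =
      f 0 := by
    rw [Finset.sum_eq_single 0 (fun w _ hw => Set.indicator_of_notMem ?_ f) (by simp)]
    · have hz : (fun i => (((0 : ι → Fin n) i : ℕ) : ℝ) / n) = 0 := funext fun i => by simp
      rw [hz, Set.indicator_of_mem (Set.mem_singleton 0)]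
    · obtain ⟨i, hi⟩ := Function.ne_iff.1 hw
      refine fun h => hi (Fin.ext ?_)
      simpa [hn] using congrFun h i
  calc riemannSum n f
      = riemannSum n (({0} : Set (ι → ℝ)).indicator f + ({0}ᶜ : Set (ι → ℝ)).indicator f) := by
        rw [Set.indicator_self_add_compl]
    _ = ((n : ℝ) ^ Fintype.card ι)⁻¹ • f 0 + riemannSum n (({0}ᶜ : Set (ι → ℝ)).indicator f) := by
        simp only [riemannSum, Pi.add_apply, Finset.sum_add_distrib, smul_add, hzero]

end RiemannSumAlgebra

section LaplacianSymbol

open Real Set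

lemma two_mul_min_le_sin_pi_mul {t : ℝ} (h0 : 0 ≤ t) (h1 : t ≤ 1) :
    2 * min t (1 - t) ≤ sin (π * t) := by
  have half : ∀ u : ℝ, 0 ≤ u → u ≤ 1 / 2 → 2 * u ≤ sin (π * u) := fun u hu0 hu => by
    have := mul_le_sin (x := π * u) (by positivity) (by nlinarith [pi_pos])
    rwa [← mul_assoc, div_mul_cancel₀ _ pi_ne_zero] at this
  rcases le_total t (1 / 2) with h | h
  · rw [min_eq_left (by linarith)]
    exact half t h0 h
  · rw [min_eq_right (by linarith), ← sin_pi_sub, ← mul_one_sub]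
    exact half (1 - t) (by linarith) (by linarith)

lemma sin_pi_mul_pos {t : ℝ} (ht : t ∈ Ioo 0 1) : 0 < sin (π * t) :=
  sin_pos_of_pos_of_lt_pi (mul_pos pi_pos ht.1) (mul_lt_of_lt_one_right pi_pos ht.2)

lemma integrableOn_sin_pi_mul_rpow {r : ℝ} (hr : -1 < r) (hr0 : r ≤ 0) :
    IntegrableOn (fun t => sin (π * t) ^ r) (Ioo 0 1) := by
  have hdom : IntegrableOn (fun t : ℝ => t ^ r + (1 - t) ^ r) (Ioo 0 1) := by
    rw [← intervalIntegrable_iff_integrableOn_Ioo_of_le zero_le_one]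
    refine (intervalIntegral.intervalIntegrable_rpow' hr).add ?_
    simpa using (intervalIntegral.intervalIntegrable_rpow' (a := 1) (b := 0) hr).comp_sub_left 1
  refine Integrable.mono' hdom (Measurable.aestronglyMeasurable (by fun_prop)) ?_
  filter_upwards [ae_restrict_mem measurableSet_Ioo] with t ht
  have ht1 : 0 < 1 - t := sub_pos.2 ht.2
  have hmin : 0 < min t (1 - t) := lt_min ht.1 ht1
  have hsin := two_mul_min_le_sin_pi_mul ht.1.le ht.2.le
  rw [norm_of_nonneg (rpow_nonneg (sin_pi_mul_pos ht).le r)]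
  calc sin (π * t) ^ r ≤ min t (1 - t) ^ r := rpow_le_rpow_of_nonpos hmin (by linarith) hr0
    _ ≤ t ^ r + (1 - t) ^ r := by
      have := rpow_nonneg ht.1.le r
      have := rpow_nonneg ht1.le r
      rcases min_choice t (1 - t) with h | h <;> rw [h] <;> linarith

variable {ι : Type*} [Fintype ι]

lemma inv_sum_le_prod_rpow_neg_inv_card [Nonempty ι] {z : ι → ℝ} (hz : ∀ i, 0 < z i) :
    (∑ i, z i)⁻¹ ≤ ∏ i, z i ^ (-(Fintype.card ι : ℝ)⁻¹) := by
  have hcard : (1 : ℝ) ≤ Fintype.card ι := by exact_mod_cast Fintype.card_pos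
  have amgm := geom_mean_le_arith_mean_weighted Finset.univ
    (fun _ : ι => (Fintype.card ι : ℝ)⁻¹) z (fun _ _ => by positivity) (by simp)
    (fun i _ => (hz i).le)
  have hle : ∏ i, z i ^ (Fintype.card ι : ℝ)⁻¹ ≤ ∑ i, z i :=
    amgm.trans <| Finset.sum_le_sum fun i _ => mul_le_of_le_one_left (hz i).le <|
      inv_le_one_of_one_le₀ hcard
  calc (∑ i, z i)⁻¹ ≤ (∏ i, z i ^ (Fintype.card ι : ℝ)⁻¹)⁻¹ :=
        inv_anti₀ (Finset.prod_pos fun i _ => rpow_pos_of_pos (hz i) _) hle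
    _ = ∏ i, z i ^ (-(Fintype.card ι : ℝ)⁻¹) := by
        rw [← Finset.prod_inv_distrib]
        exact Finset.prod_congr rfl fun i _ => (rpow_neg (hz i).le _).symm

/-- The Fourier multiplier `2 ∑ i, (1 - cos (2π sᵢ))` of the discrete Laplacian `-Δ`: the
eigenvalue `η_w` of the torus is its value at `w / n`. -/
def laplacianSymbol (s : ι → ℝ) : ℝ := 2 * ∑ i, (1 - cos (2 * π * s i))

lemma laplacianSymbol_zero : laplacianSymbol (0 : ι → ℝ) = 0 := by simp [laplacianSymbol]

lemma continuous_laplacianSymbol : Continuous (laplacianSymbol (ι := ι)) := by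
  unfold laplacianSymbol
  fun_prop

lemma laplacianSymbol_eq_sum_sin_sq (s : ι → ℝ) :
    laplacianSymbol s = 4 * ∑ i, sin (π * s i) ^ 2 := by
  simp only [laplacianSymbol, Finset.mul_sum]
  refine Finset.sum_congr rfl fun i _ => ?_
  rw [sin_sq_eq_half_sub, mul_assoc]
  ring

lemma four_mul_sin_sq_le_laplacianSymbol (s : ι → ℝ) (i : ι) :
    4 * sin (π * s i) ^ 2 ≤ laplacianSymbol s := by
  rw [laplacianSymbol_eq_sum_sin_sq]
  gcongr
  exact Finset.single_le_sum (f := fun i => sin (π * s i) ^ 2) (fun _ _ => sq_nonneg _)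
    (Finset.mem_univ i)

lemma laplacianSymbol_pos {s : ι → ℝ} {i : ι} (hi : s i ∈ Ioo 0 1) : 0 < laplacianSymbol s :=
  (mul_pos four_pos (pow_pos (sin_pi_mul_pos hi) 2)).trans_le
    (four_mul_sin_sq_le_laplacianSymbol s i)

lemma laplacianSymbol_pos_of_ne_zero {s : ι → ℝ} (hs : ∀ i, s i ∈ Ico 0 1) (hne : s ≠ 0) :
    0 < laplacianSymbol s := by
  obtain ⟨i, hi⟩ := Function.ne_iff.1 hne
  exact laplacianSymbol_pos ⟨(hs i).1.lt_of_ne' hi, (hs i).2⟩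

lemma inv_laplacianSymbol_le_prod [Nonempty ι] {t : ι → ℝ} (ht : ∀ i, t i ∈ Ioo 0 1) :
    (laplacianSymbol t)⁻¹ ≤ ∏ i, sin (π * t i) ^ (-(2 / Fintype.card ι) : ℝ) := by
  have hsq : ∀ i, 0 < sin (π * t i) ^ 2 := fun i => pow_pos (sin_pi_mul_pos (ht i)) 2
  have hsum : 0 < ∑ i, sin (π * t i) ^ 2 :=
    Finset.sum_pos (fun i _ => hsq i) Finset.univ_nonempty
  calc (laplacianSymbol t)⁻¹ ≤ (∑ i, sin (π * t i) ^ 2)⁻¹ := by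
        rw [laplacianSymbol_eq_sum_sin_sq]
        exact inv_anti₀ hsum (by linarith)
    _ ≤ ∏ i, (sin (π * t i) ^ 2) ^ (-(Fintype.card ι : ℝ)⁻¹) :=
        inv_sum_le_prod_rpow_neg_inv_card hsq
    _ = ∏ i, sin (π * t i) ^ (-(2 / Fintype.card ι) : ℝ) := by
        refine Finset.prod_congr rfl fun i _ => ?_
        rw [← rpow_natCast, ← rpow_mul (sin_pi_mul_pos (ht i)).le]
        congr 1
        push_cast
        ring

lemma integrableOn_inv_laplacianSymbol (hι : 3 ≤ Fintype.card ι) :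
    IntegrableOn (fun t : ι → ℝ => (laplacianSymbol t)⁻¹) (Icc 0 1) := by
  have hcard : (3 : ℝ) ≤ Fintype.card ι := by exact_mod_cast hι
  have : Nonempty ι := Fintype.card_pos_iff.1 (by lia)
  have hexp : (2 / Fintype.card ι : ℝ) < 1 := by rw [div_lt_one] <;> linarith
  have hdom : IntegrableOn (fun t : ι → ℝ => ∏ i, sin (π * t i) ^ (-(2 / Fintype.card ι) : ℝ))
      (Icc 0 1) := by
    have hcube : univ.pi (fun _ : ι => Ioo (0 : ℝ) 1) =ᵐ[volume] Icc (0 : ι → ℝ) 1 :=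
      Measure.univ_pi_Ioo_ae_eq_Icc
    rw [← integrableOn_congr_set_ae hcube, IntegrableOn, volume_pi, Measure.restrict_pi_pi]
    exact Integrable.fintype_prod fun _ =>
      integrableOn_sin_pi_mul_rpow (by linarith) (neg_nonpos.2 (by positivity))
  refine Integrable.mono' hdom
    continuous_laplacianSymbol.measurable.inv.aestronglyMeasurable ?_
  refine ae_restrict_Icc_of_forall_Ioo fun t ht => ?_
  rw [norm_of_nonneg (inv_nonneg.2 (laplacianSymbol_pos (ht (Classical.arbitrary ι))).le)]
  exact inv_laplacianSymbol_le_prod ht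

/- The coordinate `s j` keeps distance `δ` from the zeros of the symbol, so the symbol at `s` is at
least `16 δ²` and absorbs the Lipschitz error made in passing from `s` to `t`. -/
lemma laplacianSymbol_le_mul_of_abs_sub_le {δ : ℝ} {s t : ι → ℝ} (hδ : 0 ≤ δ)
    (hst : ∀ i, |t i - s i| ≤ δ) {j : ι} (hj : s j ∈ Icc δ (1 - δ)) :
    laplacianSymbol t ≤ (2 + 8 * Fintype.card ι) * laplacianSymbol s := by
  have hδs : 16 * δ ^ 2 ≤ laplacianSymbol s := by
    have hmin : δ ≤ min (s j) (1 - s j) := le_min hj.1 (by linarith [hj.2])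
    have hsin := two_mul_min_le_sin_pi_mul (hδ.trans hj.1) (by linarith [hj.2])
    have := pow_le_pow_left₀ (by positivity) (show 2 * δ ≤ sin (π * s j) by linarith) 2
    linarith [four_mul_sin_sq_le_laplacianSymbol s j]
  have hterm : ∀ i, sin (π * t i) ^ 2 ≤ 2 * sin (π * s i) ^ 2 + 32 * δ ^ 2 := fun i => by
    have hLip : |sin (π * t i) - sin (π * s i)| ≤ 4 * δ := by
      calc |sin (π * t i) - sin (π * s i)| ≤ |π * t i - π * s i| := abs_sin_sub_sin_le _ _
        _ = π * |t i - s i| := by rw [← mul_sub, abs_mul, abs_of_pos pi_pos]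
        _ ≤ 4 * δ := mul_le_mul pi_le_four (hst i) (abs_nonneg _) zero_le_four
    have := sq_le_sq.2 (hLip.trans (le_abs_self _))
    linarith [sq_nonneg (sin (π * t i) - 2 * sin (π * s i))]
  calc laplacianSymbol t ≤ 4 * ∑ i, (2 * sin (π * s i) ^ 2 + 32 * δ ^ 2) := by
        rw [laplacianSymbol_eq_sum_sin_sq]
        gcongr with i
        exact hterm i
    _ = 2 * laplacianSymbol s + 8 * Fintype.card ι * (16 * δ ^ 2) := by
        rw [laplacianSymbol_eq_sum_sin_sq, Finset.sum_add_distrib, ← Finset.mul_sum,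
          Finset.sum_const, Finset.card_univ, nsmul_eq_mul]
        ring
    _ ≤ (2 + 8 * Fintype.card ι) * laplacianSymbol s := by
        rw [add_mul]
        gcongr

lemma inv_laplacianSymbol_latticeFloor_le {n : ℕ} {t : ι → ℝ} (ht : ∀ i, t i ∈ Ioo 0 1)
    (hne : latticeFloor n t ≠ 0) :
    (laplacianSymbol (latticeFloor n t))⁻¹ ≤
      (2 + 8 * Fintype.card ι) * (laplacianSymbol t)⁻¹ := by
  have ht' : ∀ i, t i ∈ Ico 0 1 := fun i => Ioo_subset_Ico_self (ht i)
  obtain ⟨j, hj⟩ := exists_latticeFloor_mem_Icc ht' hne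
  have hn : n ≠ 0 := by
    rintro rfl
    exact hne (funext fun i => by simp [latticeFloor])
  have hpos := laplacianSymbol_pos (ht j)
  have hpos' := laplacianSymbol_pos_of_ne_zero (fun i => latticeFloor_mem_Ico (ht' i)) hne
  have hle := laplacianSymbol_le_mul_of_abs_sub_le (by positivity : (0 : ℝ) ≤ 1 / n)
    (fun i => abs_sub_latticeFloor_le hn (ht i).1.le) hj
  rwa [← div_eq_mul_inv, le_div_iff₀ hpos, inv_mul_le_iff₀ hpos', mul_comm (laplacianSymbol _)]

end LaplacianSymbol

section GreenSymbol

open Real Set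

variable {ι : Type*} [Fintype ι]

/-- The Fourier integrand `cos (2π a·s) / (m² + η(s))` of the massive Green's function at
displacement `a`. -/
def greenSymbol (m2 : ℝ) (a s : ι → ℝ) : ℝ :=
  cos (2 * π * ∑ i, a i * s i) / (m2 + laplacianSymbol s)

lemma greenSymbol_apply_zero (m2 : ℝ) (a : ι → ℝ) : greenSymbol m2 a 0 = m2⁻¹ := by
  simp [greenSymbol, laplacianSymbol_zero]

lemma abs_greenSymbol_le {m2 : ℝ} (hm2 : 0 ≤ m2) (a : ι → ℝ) {s : ι → ℝ}
    (hs : 0 < laplacianSymbol s) : |greenSymbol m2 a s| ≤ (laplacianSymbol s)⁻¹ := by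
  rw [greenSymbol, abs_div, abs_of_pos (by positivity : 0 < m2 + laplacianSymbol s), ← one_div]
  exact div_le_div₀ zero_le_one (abs_cos_le_one _) hs (by linarith)

lemma tendsto_greenSymbol {m2 : ℕ → ℝ} (hm2 : Tendsto m2 atTop (𝓝 0)) (a : ι → ℝ) {t : ι → ℝ}
    (ht : laplacianSymbol t ≠ 0) :
    Tendsto (fun p : ℕ × (ι → ℝ) => greenSymbol (m2 p.1) a p.2) (atTop ×ˢ 𝓝 t)
      (𝓝 (greenSymbol 0 a t)) := by
  have hcos : Continuous fun s : ι → ℝ => cos (2 * π * ∑ i, a i * s i) := by fun_prop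
  refine ((hcos.tendsto t).comp tendsto_snd).div ?_ (by simpa using ht)
  exact (hm2.comp tendsto_fst).add ((continuous_laplacianSymbol.tendsto t).comp tendsto_snd)

/-- The torus Green's function at displacement `a` with the contribution `1 / (n ^ d * m²)` of the
constant Fourier mode removed. -/
def nonzeroModeGreen (n : ℕ) (m2 : ℝ) (a : ι → ℝ) : ℝ :=
  riemannSum n (({0}ᶜ : Set (ι → ℝ)).indicator (greenSymbol m2 a))

lemma riemannSum_greenSymbol {n : ℕ} (hn : n ≠ 0) (m2 : ℝ) (a : ι → ℝ) :
    riemannSum n (greenSymbol m2 a) =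
      ((n : ℝ) ^ Fintype.card ι * m2)⁻¹ + nonzeroModeGreen n m2 a := by
  rw [riemannSum_eq_add_indicator_compl hn, greenSymbol_apply_zero, smul_eq_mul, ← mul_inv,
    nonzeroModeGreen]

theorem tendsto_nonzeroModeGreen (hι : 3 ≤ Fintype.card ι) {m2 : ℕ → ℝ}
    (hm2_nonneg : ∀ᶠ n in atTop, 0 ≤ m2 n) (hm2 : Tendsto m2 atTop (𝓝 0)) (a : ι → ℝ) :
    Tendsto (fun n => nonzeroModeGreen n (m2 n) a) atTop
      (𝓝 (∫ t in Icc (0 : ι → ℝ) 1, greenSymbol 0 a t)) := by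
  have : Nonempty ι := Fintype.card_pos_iff.1 (by lia)
  let i : ι := Classical.arbitrary ι
  refine tendsto_riemannSum_of_dominated _
    ((integrableOn_inv_laplacianSymbol hι).const_mul (2 + 8 * Fintype.card ι : ℝ)) ?_ ?_
  · filter_upwards [hm2_nonneg] with n hn t ht
    by_cases hne : latticeFloor n t = 0
    · rw [hne, indicator_of_notMem (by simp), norm_zero]
      exact mul_nonneg (by positivity) (inv_pos.2 (laplacianSymbol_pos (ht i))).le
    · rw [indicator_of_mem (mem_compl_singleton_iff.2 hne)]
      have hpos : 0 < laplacianSymbol (latticeFloor n t) := laplacianSymbol_pos_of_ne_zero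
        (fun i => latticeFloor_mem_Ico (Ioo_subset_Ico_self (ht i))) hne
      exact (abs_greenSymbol_le hn a hpos).trans (inv_laplacianSymbol_latticeFloor_le ht hne)
  · intro t ht
    refine (tendsto_greenSymbol hm2 a (laplacianSymbol_pos (ht i)).ne').congr' ?_
    have hne : t ≠ 0 := fun h => (ht i).1.ne' (congrFun h i)
    filter_upwards [tendsto_snd.eventually (isOpen_compl_singleton.mem_nhds hne)] with p hp
    exact (indicator_of_mem hp _).symm

lemma nonzeroModeGreen_le_nonzeroModeGreen_zero (n : ℕ) {m2 : ℝ} (hm2 : 0 ≤ m2) :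
    nonzeroModeGreen n m2 (0 : ι → ℝ) ≤ nonzeroModeGreen n 0 (0 : ι → ℝ) := by
  refine riemannSum_mono fun s hs => indicator_le_indicator' fun hne => ?_
  have hpos : 0 < laplacianSymbol s := laplacianSymbol_pos_of_ne_zero hs hne
  simp only [greenSymbol, Pi.zero_apply, zero_mul, Finset.sum_const_zero, mul_zero, cos_zero]
  gcongr

section MassEquation

variable {β : ℝ} {m2 : ℕ → ℝ}

lemma tendsto_mass_zero (hι : 3 ≤ Fintype.card ι)
    (hβ : ∫ t in Icc (0 : ι → ℝ) 1, greenSymbol 0 0 t < β) (hm2 : ∀ᶠ n in atTop, 0 < m2 n)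
    (h_mass : ∀ᶠ n in atTop, riemannSum n (greenSymbol (m2 n) (0 : ι → ℝ)) = β) :
    Tendsto m2 atTop (𝓝 0) := by
  obtain ⟨b, hb, hbβ⟩ := exists_between hβ
  have hsub : 0 < β - b := sub_pos.2 hbβ
  have hS := (tendsto_nonzeroModeGreen hι (.of_forall fun _ => le_rfl) tendsto_const_nhds
    (0 : ι → ℝ)).eventually_lt_const hb
  have hvol : Tendsto (fun n : ℕ => (β - b)⁻¹ / (n : ℝ) ^ Fintype.card ι) atTop (𝓝 0) :=
    ((tendsto_pow_atTop (by lia)).comp tendsto_natCast_atTop_atTop).const_div_atTop _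
  refine squeeze_zero' (hm2.mono fun _ => le_of_lt) ?_ hvol
  filter_upwards [hS, hm2, h_mass, eventually_ne_atTop 0] with n hn hpos heq hn0
  rw [riemannSum_greenSymbol hn0] at heq
  have hle := nonzeroModeGreen_le_nonzeroModeGreen_zero (ι := ι) n hpos.le
  have hinv : β - b ≤ ((n : ℝ) ^ Fintype.card ι * m2 n)⁻¹ := by linarith
  rw [le_div_iff₀' (by positivity)]
  exact (le_inv_comm₀ hsub (by positivity)).1 hinv

lemma tendsto_inv_card_pow_mul_mass (hι : 3 ≤ Fintype.card ι)
    (hβ : ∫ t in Icc (0 : ι → ℝ) 1, greenSymbol 0 0 t < β) (hm2 : ∀ᶠ n in atTop, 0 < m2 n)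
    (h_mass : ∀ᶠ n in atTop, riemannSum n (greenSymbol (m2 n) (0 : ι → ℝ)) = β) :
    Tendsto (fun n : ℕ => ((n : ℝ) ^ Fintype.card ι * m2 n)⁻¹) atTop
      (𝓝 (β - ∫ t in Icc (0 : ι → ℝ) 1, greenSymbol 0 0 t)) := by
  refine ((tendsto_nonzeroModeGreen hι (hm2.mono fun _ => le_of_lt)
    (tendsto_mass_zero hι hβ hm2 h_mass) (0 : ι → ℝ)).const_sub β).congr' ?_
  filter_upwards [h_mass, eventually_ne_atTop 0] with n heq hn0
  rw [← heq, riemannSum_greenSymbol hn0, add_sub_cancel_right]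

theorem tendsto_riemannSum_greenSymbol (hι : 3 ≤ Fintype.card ι)
    (hβ : ∫ t in Icc (0 : ι → ℝ) 1, greenSymbol 0 0 t < β) (hm2 : ∀ᶠ n in atTop, 0 < m2 n)
    (h_mass : ∀ᶠ n in atTop, riemannSum n (greenSymbol (m2 n) (0 : ι → ℝ)) = β) (a : ι → ℝ) :
    Tendsto (fun n => riemannSum n (greenSymbol (m2 n) a)) atTop
      (𝓝 ((∫ t in Icc (0 : ι → ℝ) 1, greenSymbol 0 a t) +
        (β - ∫ t in Icc (0 : ι → ℝ) 1, greenSymbol 0 0 t))) := by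
  rw [add_comm]
  refine ((tendsto_inv_card_pow_mul_mass hι hβ hm2 h_mass).add
    (tendsto_nonzeroModeGreen hι (hm2.mono fun _ => le_of_lt)
      (tendsto_mass_zero hι hβ hm2 h_mass) a)).congr' ?_
  filter_upwards [eventually_ne_atTop 0] with n hn0
  exact (riemannSum_greenSymbol hn0 _ a).symm

end MassEquation

end GreenSymbol

section Torus

lemma eta_eq_laplacianSymbol (d n : ℕ) (w : Fin d → Fin n) :
    eta d n w = laplacianSymbol fun i => ((w i : ℕ) : ℝ) / n := by
  simp only [eta, laplacianSymbol, mul_div_assoc]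

lemma average_inv_add_eta_eq_riemannSum (d n : ℕ) (m2 : ℝ) :
    (1 / (n : ℝ) ^ d) * ∑ w : Fin d → Fin n, 1 / (m2 + eta d n w) =
      riemannSum n (greenSymbol m2 (0 : Fin d → ℝ)) := by
  simp only [riemannSum, greenSymbol, eta_eq_laplacianSymbol, smul_eq_mul, one_div,
    Fintype.card_fin, Pi.zero_apply, zero_mul, Finset.sum_const_zero, mul_zero, Real.cos_zero]
  congr!

lemma cos_two_pi_mul_val_eq {d n : ℕ} (hn : n ≠ 0) (x y : Fin d → ℤ) (w : Fin d → ℕ) :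
    Real.cos (2 * Real.pi * (∑ i, (w i : ℝ) * (((x i : ZMod n) - (y i : ZMod n)).val : ℝ)) / n) =
      Real.cos (2 * Real.pi * ∑ i, ((x i : ℝ) - y i) * ((w i : ℝ) / n)) := by
  have : NeZero n := ⟨hn⟩
  have hval : ∀ i, (((x i : ZMod n) - (y i : ZMod n)).val : ℝ) =
      (x i - y i : ℝ) - n * ((x i - y i) / n : ℤ) := fun i => by
    have := ZMod.val_intCast (n := n) (x i - y i)
    rw [Int.emod_def] at this
    exact_mod_cast this
  rw [← Real.cos_sub_int_mul_two_pi (2 * Real.pi * ∑ i, _) (∑ i, w i * ((x i - y i) / n))]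
  congr 1
  rw [mul_div_assoc, Finset.sum_div, Int.cast_sum, mul_comm _ (2 * Real.pi), ← mul_sub,
    ← Finset.sum_sub_distrib]
  congr 1
  refine Finset.sum_congr rfl fun i _ => ?_
  rw [hval, Int.cast_mul, Int.cast_natCast]
  field_simp

lemma torusGreen_intCast_eq_riemannSum {d n : ℕ} (hn : n ≠ 0) (m2 : ℝ) (x y : Fin d → ℤ) :
    torusGreen d n m2 (fun i => (x i : ZMod n)) (fun i => (y i : ZMod n)) =
      riemannSum n (greenSymbol m2 fun i => (x i : ℝ) - y i) := by
  simp only [torusGreen, riemannSum, greenSymbol, eta_eq_laplacianSymbol, smul_eq_mul, one_div,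
    Fintype.card_fin, cos_two_pi_mul_val_eq hn]
  congr!

lemma greenZ_eq_setIntegral (d : ℕ) (x y : Fin d → ℤ) :
    greenZ d x y =
      ∫ t in Set.Icc (0 : Fin d → ℝ) 1, greenSymbol 0 (fun i => (x i : ℝ) - y i) t := rfl

lemma betaC_eq_setIntegral (d : ℕ) :
    betaC d = ∫ t in Set.Icc (0 : Fin d → ℝ) 1, greenSymbol 0 0 t := by
  simp [betaC, greenZ_eq_setIntegral, ← Pi.zero_def]

end Torus

/-- Low-temperature asymptotics of the torus mass and Green's function:
for `d ≥ 3`, `β > β_c`, and `m_n²` the unique positive solution of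
`n^{-d} ∑_w 1/(m² + η_w) = β`, one has `n^d m_n² → 1/(β − β_c)` and
`G_{n,m_n²}(x̄,ȳ) → G_{ℤ^d}(x,y) + (β − β_c)` for all `x, y ∈ ℤ^d`. -/
theorem torus_mass_low_temperature_asymptotics
    (d : ℕ) (hd : 3 ≤ d) (β : ℝ) (hβ : betaC d < β) (m2 : ℕ → ℝ)
    (hm2 : ∀ n : ℕ, 3 ≤ n → 0 < m2 n ∧
      (1 / (n : ℝ) ^ d) * ∑ w : Fin d → Fin n, 1 / (m2 n + eta d n w) = β) :
    Tendsto (fun n : ℕ => (n : ℝ) ^ d * m2 n) atTop (nhds (1 / (β - betaC d))) ∧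
    ∀ x y : Fin d → ℤ,
      Tendsto
        (fun n : ℕ => torusGreen d n (m2 n)
          (fun i => (x i : ZMod n)) (fun i => (y i : ZMod n)))
        atTop (nhds (greenZ d x y + (β - betaC d))) := by
  have hcard : 3 ≤ Fintype.card (Fin d) := by simpa using hd
  have hpos : ∀ᶠ n in atTop, 0 < m2 n := by
    filter_upwards [eventually_ge_atTop 3] with n hn using (hm2 n hn).1
  have h_mass : ∀ᶠ n in atTop, riemannSum n (greenSymbol (m2 n) (0 : Fin d → ℝ)) = β := by
    filter_upwards [eventually_ge_atTop 3] with n hn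
    rw [← average_inv_add_eta_eq_riemannSum, (hm2 n hn).2]
  rw [betaC_eq_setIntegral] at hβ ⊢
  refine ⟨?_, fun x y => ?_⟩
  · simpa using (tendsto_inv_card_pow_mul_mass hcard hβ hpos h_mass).inv₀ (sub_pos.2 hβ).ne'
  · refine (tendsto_riemannSum_greenSymbol hcard hβ hpos h_mass _).congr' ?_
    filter_upwards [eventually_ne_atTop 0] with n hn
    exact (torusGreen_intCast_eq_riemannSum hn (m2 n) x y).symm

end
end

section
/- Let d ≥ 3. There exist a constant C = C(d) > 0 and n_0 ∈ ℕ such that for all n ≥ n_0 and all y ∈ [−n/2, n/2)^d ∩ ℤ^d, |G_n^0(0, ȳ) − G_{ℤ^d}(0, y)| ≤ C·n^{2−d}; in particular, if |y| = Θ(n), then G_n^0(0, ȳ) = O(n^{2−d}). -/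
open MeasureTheory ProbabilityTheory Filter Topology Matrix
open scoped Classical ENNReal

noncomputable section

/-!
Both Green's functions are time integrals of heat kernels: `G_{ℤ^d} = ∫₀^∞ p_t dt` and
`G_n^0 = ∫₀^∞ (p^n_t - n^{-d}) dt`, the subtraction removing the zero mode. Split both integrals at
the relaxation time `t = n²` of the torus.

For `t ≤ n²` the kernels are close: they factor over the coordinates, and in one dimension the torus
kernel is a Riemann sum for the Fourier integral giving the lattice kernel, so by aliasing (Poisson
summation) it is the sum of the lattice kernel over the translates of the displacement by `nℤ`.
Shifting the contour of that integral to radius `exp (± 1 / √(1 + t))` shows that the lattice kernel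
at displacement `m` is at most `exp 6 / √(1 + t) * exp (-|m| / √(1 + t))`; as displacements are at
most `n / 2`, this gives `|p^n_t - p_t| ≤ C n^{-d}`.

For `t ≥ n²` each integral is `O(n^{2-d})` by itself: for the lattice since `p_t ≤ C t^{-d/2}`, and
for the torus since the nonzero modes sum to `O(1)` at time `n²` and each decays at rate at least
`n^{-2}` from then on.
-/

/-! ### Fourier coefficients and contour shifts -/

theorem circleAverage_eq_circleAverage_of_differentiableOn_compl_center {E : Type*}
    [NormedAddCommGroup E] [NormedSpace ℂ E] {f : ℂ → E} {c : ℂ}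
    (hf : DifferentiableOn ℂ f {c}ᶜ) {r R : ℝ} (hr : 0 < r) (hR : 0 < R) :
    Real.circleAverage f c r = Real.circleAverage f c R := by
  wlog hrR : r ≤ R generalizing r R
  · exact (this hR hr (le_of_not_ge hrR)).symm
  have hdiff : ∀ z ≠ c, DifferentiableAt ℂ f z := fun z hz =>
    hf.differentiableAt (isOpen_compl_singleton.mem_nhds hz)
  have hne : ∀ z ∉ Metric.ball c r, z ≠ c := by
    rintro z hz rfl
    exact hz (Metric.mem_ball_self hr)
  rw [Real.circleAverage_eq_circleIntegral hr.ne', Real.circleAverage_eq_circleIntegral hR.ne',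
    Complex.circleIntegral_sub_center_inv_smul_eq_of_differentiable_on_annulus_off_countable
      hr hrR Set.countable_empty
      (fun z hz => (hdiff z (hne z hz.2)).continuousAt.continuousWithinAt)
      fun z hz => hdiff z (hne z fun h => hz.1.2 (Metric.ball_subset_closedBall h))]

theorem fourierCoeff_comp_mul_fourier_one {E : Type*} [NormedAddCommGroup E] [NormedSpace ℂ E]
    (f : ℂ → E) {r : ℝ} (hr : r ≠ 0) (m : ℤ) :
    fourierCoeff (fun x : UnitAddCircle => f (r * fourier 1 x)) m =
      (r : ℂ) ^ m • Real.circleAverage (fun z => z ^ (-m) • f z) 0 r := by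
  set g : ℂ → E := fun z => z ^ (-m) • f z
  have hmap : ∀ s : ℝ, circleMap 0 r (s * (2 * Real.pi)) = r * fourier 1 (s : UnitAddCircle) := by
    intro s
    rw [circleMap_zero, fourier_coe_apply]
    congr 2
    push_cast
    ring
  have hpow : ∀ s : ℝ,
      fourier 1 (s : UnitAddCircle) ^ (-m) = fourier (-m) (s : UnitAddCircle) := by
    intro s
    rw [fourier_coe_apply, fourier_coe_apply, ← Complex.exp_int_mul]
    congr 1
    push_cast
    ring
  have havg : Real.circleAverage g 0 r =
      ∫ s in (0 : ℝ)..1, g (circleMap 0 r (s * (2 * Real.pi))) := by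
    rw [intervalIntegral.integral_comp_mul_right (fun θ => g (circleMap 0 r θ))
      Real.two_pi_pos.ne', Real.circleAverage_def, zero_mul, one_mul]
  rw [havg, fourierCoeff_eq_intervalIntegral _ _ 0, div_one, one_smul, zero_add,
    ← intervalIntegral.integral_smul]
  refine intervalIntegral.integral_congr fun s _ => ?_
  simp only [g, hmap, mul_zpow, hpow, smul_smul]
  rw [← mul_assoc, ← zpow_add₀ (Complex.ofReal_ne_zero.2 hr), add_neg_cancel, zpow_zero, one_mul]

theorem fourierCoeff_comp_fourier_one_eq_zpow_smul {E : Type*} [NormedAddCommGroup E]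
    [NormedSpace ℂ E] {f : ℂ → E} (hf : DifferentiableOn ℂ f {0}ᶜ) {r : ℝ} (hr : 0 < r) (m : ℤ) :
    fourierCoeff (fun x : UnitAddCircle => f (fourier 1 x)) m =
      (r : ℂ) ^ (-m) • fourierCoeff (fun x : UnitAddCircle => f (r * fourier 1 x)) m := by
  have hdiff : DifferentiableOn ℂ (fun z => z ^ (-m) • f z) {0}ᶜ :=
    (differentiableOn_zpow (-m) _ (Or.inl (Set.notMem_compl_iff.2 (Set.mem_singleton 0)))).smul hf
  have hone := fourierCoeff_comp_mul_fourier_one f one_ne_zero m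
  simp only [Complex.ofReal_one, one_mul, _root_.one_zpow, one_smul] at hone
  rw [hone, fourierCoeff_comp_mul_fourier_one f hr.ne', smul_smul,
    ← zpow_add₀ (Complex.ofReal_ne_zero.2 hr.ne'), neg_add_cancel, zpow_zero, one_smul,
    circleAverage_eq_circleAverage_of_differentiableOn_compl_center hdiff one_pos hr]

/-! ### Aliasing -/

/-- The `j`-th Fourier coefficient of `f` computed with the Riemann sum over the `n` equally spaced
points `T * w / n` in place of the integral. -/
def discreteFourierCoeff {T : ℝ} (n : ℕ) (f : AddCircle T → ℂ) (j : ℤ) : ℂ :=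
  (n : ℂ)⁻¹ * ∑ w : Fin n, fourier (-j) ((T * w / n : ℝ) : AddCircle T) * f (T * w / n : ℝ)

theorem fourier_coe_mul_natCast_div {T : ℝ} (hT : T ≠ 0) (n w : ℕ) (k : ℤ) :
    fourier k ((T * w / n : ℝ) : AddCircle T) =
      (Complex.exp (2 * Real.pi * Complex.I / n) ^ k) ^ w := by
  rw [fourier_coe_apply, ← Complex.exp_int_mul, ← Complex.exp_nat_mul]
  congr 1
  have : (T : ℂ) ≠ 0 := Complex.ofReal_ne_zero.2 hT
  push_cast
  field_simp

theorem discreteFourierCoeff_fourier {T : ℝ} (hT : T ≠ 0) {n : ℕ} (hn : n ≠ 0) (j m : ℤ) :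
    discreteFourierCoeff n (fourier m : C(AddCircle T, ℂ)) j =
      if (n : ℤ) ∣ m - j then 1 else 0 := by
  have hζ := Complex.isPrimitiveRoot_exp n hn
  have hn' : (n : ℂ) ≠ 0 := Nat.cast_ne_zero.2 hn
  have hsum : ∑ w : Fin n, fourier (-j) ((T * w / n : ℝ) : AddCircle T) *
      fourier m ((T * w / n : ℝ) : AddCircle T) =
      ∑ w ∈ Finset.range n, (Complex.exp (2 * Real.pi * Complex.I / n) ^ (m - j)) ^ w := by
    rw [← Fin.sum_univ_eq_sum_range
      (fun w => (Complex.exp (2 * Real.pi * Complex.I / n) ^ (m - j)) ^ w)]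
    refine Finset.sum_congr rfl fun w _ => ?_
    rw [← fourier_add, neg_add_eq_sub, fourier_coe_mul_natCast_div hT]
  rw [discreteFourierCoeff, hsum]
  split_ifs with hdvd
  · simp [(hζ.zpow_eq_one_iff_dvd _).2 hdvd, hn']
  · have hne := mt (hζ.zpow_eq_one_iff_dvd _).1 hdvd
    rw [geom_sum_eq hne, ← zpow_natCast, ← _root_.zpow_mul, mul_comm (m - j), _root_.zpow_mul,
      zpow_natCast, hζ.pow_eq_one, _root_.one_zpow, sub_self, zero_div, mul_zero]

theorem hasSum_fourierCoeff_discreteFourierCoeff {T : ℝ} [hT : Fact (0 < T)]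
    {f : C(AddCircle T, ℂ)} (hf : Summable (fourierCoeff f)) {n : ℕ} (hn : n ≠ 0) (j : ℤ) :
    HasSum (fun k : ℤ => fourierCoeff f (j + n * k)) (discreteFourierCoeff n f j) := by
  have hsum : HasSum
      (fun m => fourierCoeff f m * discreteFourierCoeff n (fourier m : C(AddCircle T, ℂ)) j)
      (discreteFourierCoeff n f j) := by
    have hexpand (m : ℤ) :
        fourierCoeff f m * discreteFourierCoeff n (fourier m : C(AddCircle T, ℂ)) j =
          (n : ℂ)⁻¹ * ∑ w : Fin n, fourier (-j) ((T * w / n : ℝ) : AddCircle T) *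
            fourierCoeff f m • fourier m ((T * w / n : ℝ) : AddCircle T) := by
      simp only [discreteFourierCoeff, smul_eq_mul, Finset.mul_sum]
      exact Finset.sum_congr rfl fun w _ => by ring
    simp only [hexpand]
    exact (hasSum_sum fun w _ =>
      (has_pointwise_sum_fourier_series_of_summable hf _).mul_left _).mul_left _
  have hinj : Function.Injective fun k : ℤ => j + n * k := fun a b hab => by
    simpa [hn] using hab
  rw [← hinj.hasSum_iff] at hsum
  · simpa [Function.comp_def, discreteFourierCoeff_fourier hT.out.ne' hn] using hsum
  · intro m hm
    rw [discreteFourierCoeff_fourier hT.out.ne' hn, if_neg, mul_zero]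
    rintro ⟨k, hk⟩
    exact hm ⟨k, by dsimp only; linarith⟩

theorem hasSum_pow_natAbs {K : Type*} [NormedField K] {r : K} (hr : ‖r‖ < 1) :
    HasSum (fun k : ℤ => r ^ k.natAbs) ((1 - r)⁻¹ + (1 - r)⁻¹ - 1) := by
  have hgeom := hasSum_geometric_of_norm_lt_one hr
  simpa using HasSum.of_nat_of_neg (f := fun k : ℤ => r ^ k.natAbs)
    (by simpa using hgeom) (by simpa using hgeom)

theorem exp_neg_mul_abs_intCast (c : ℝ) (m : ℤ) :
    Real.exp (-(c * |(m : ℝ)|)) = Real.exp (-c) ^ m.natAbs := by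
  rw [← Real.exp_nat_mul, Nat.cast_natAbs, Int.cast_abs]
  congr 1
  ring

theorem half_mul_abs_le_abs_add_mul {n : ℕ} {j k : ℤ} (hj : 2 * |j| ≤ n) (hk : k ≠ 0) :
    (n : ℝ) / 2 * |(k : ℝ)| ≤ |((j + n * k : ℤ) : ℝ)| := by
  have hj' : 2 * |(j : ℝ)| ≤ n := by exact_mod_cast hj
  have hk' : (1 : ℝ) ≤ |(k : ℝ)| := by exact_mod_cast Int.one_le_abs hk
  calc (n : ℝ) / 2 * |(k : ℝ)| = n * |(k : ℝ)| - n / 2 * |(k : ℝ)| := by ring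
    _ ≤ n * |(k : ℝ)| - |(j : ℝ)| := by
      gcongr
      nlinarith [abs_nonneg (j : ℝ)]
    _ = |(n * k : ℝ)| - |-(j : ℝ)| := by rw [abs_mul, Nat.abs_cast, abs_neg]
    _ ≤ |(n * k : ℝ) - -(j : ℝ)| := abs_sub_abs_le_abs_sub _ _
    _ = |((j + n * k : ℤ) : ℝ)| := by
      push_cast
      rw [sub_neg_eq_add, add_comm]

theorem norm_discreteFourierCoeff_sub_fourierCoeff_le {T : ℝ} [Fact (0 < T)]
    {f : C(AddCircle T, ℂ)} {B c : ℝ} (hc : 0 < c)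
    (hf : ∀ m : ℤ, ‖fourierCoeff f m‖ ≤ B * Real.exp (-(c * |(m : ℝ)|)))
    {n : ℕ} (hn : n ≠ 0) {j : ℤ} (hj : 2 * |j| ≤ n) :
    ‖discreteFourierCoeff n f j - fourierCoeff f j‖ ≤ 2 * B / (Real.exp (c * n / 2) - 1) := by
  have hB : 0 ≤ B := nonneg_of_mul_nonneg_left ((norm_nonneg _).trans (hf 0)) (Real.exp_pos _)
  have hnorm {a : ℝ} (ha : 0 < a) : ‖Real.exp (-a)‖ < 1 := by
    rwa [Real.norm_of_nonneg (Real.exp_pos _).le, Real.exp_lt_one_iff, neg_lt_zero]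
  have hsummable : Summable (fourierCoeff f) := by
    refine .of_norm_bounded ((hasSum_pow_natAbs (hnorm hc)).summable.mul_left B) fun m => ?_
    rw [← exp_neg_mul_abs_intCast]
    exact hf m
  have hcn : 0 < c * n / 2 := by positivity
  have hdiff := (hasSum_fourierCoeff_discreteFourierCoeff hsummable hn j).sub
    (hasSum_ite_eq 0 (fourierCoeff f j))
  have hmajor := ((hasSum_pow_natAbs (hnorm hcn)).sub (hasSum_ite_eq 0 1)).mul_left B
  refine (hdiff.norm_le_of_bounded hmajor fun k => ?_).trans_eq ?_
  · rcases eq_or_ne k 0 with rfl | hk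
    · simp
    rw [if_neg hk, if_neg hk, sub_zero, sub_zero, ← exp_neg_mul_abs_intCast]
    refine (hf _).trans ?_
    rw [mul_div_assoc, mul_assoc c]
    gcongr
    exact half_mul_abs_le_abs_add_mul hj hk
  · have hlt : Real.exp (-(c * n / 2)) < 1 := by simpa using hcn
    have hne := (sub_pos.2 hlt).ne'
    have hne' : Real.exp (c * n / 2) - 1 ≠ 0 := (sub_pos.2 (Real.one_lt_exp_iff.2 hcn)).ne'
    simp only [Real.exp_neg] at hne ⊢
    field_simp
    ring

/-! ### Elementary estimates and integrals -/

theorem pow_div_factorial_le_exp_sub_one {x : ℝ} (hx : 0 ≤ x) {k : ℕ} (hk : k ≠ 0) :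
    x ^ k / k.factorial ≤ Real.exp x - 1 := by
  have hsub : {0, k} ⊆ Finset.range (k + 1) := by
    simp [Finset.insert_subset_iff]
  have hpair : ∑ i ∈ {0, k}, x ^ i / (i.factorial : ℝ) = 1 + x ^ k / k.factorial := by
    simp [Finset.sum_pair hk.symm]
  have := (Finset.sum_le_sum_of_subset_of_nonneg hsub fun i _ _ => by positivity).trans
    (Real.sum_le_exp_of_nonneg hx (k + 1))
  linarith [hpair ▸ this]

theorem cosh_sub_one_le_sq {a : ℝ} (ha : a ^ 2 ≤ 1) : Real.cosh a - 1 ≤ a ^ 2 := by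
  have hexp := Real.abs_exp_sub_one_le (x := a ^ 2 / 2) (by
    rw [abs_of_nonneg (by positivity)]
    linarith)
  rw [abs_of_nonneg (show 0 ≤ a ^ 2 / 2 by positivity)] at hexp
  linarith [Real.cosh_le_exp_half_sq a, (abs_le.1 hexp).2]

theorem mul_sq_le_one_sub_cos_two_pi_mul {s : ℝ} (hs : |s| ≤ 1 / 2) :
    8 * s ^ 2 ≤ 1 - Real.cos (2 * Real.pi * s) := by
  have habs : |2 * Real.pi * s| ≤ Real.pi := by
    rw [abs_mul, abs_of_pos Real.two_pi_pos]
    nlinarith [Real.pi_pos]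
  have hcoeff : 2 / Real.pi ^ 2 * (2 * Real.pi * s) ^ 2 = 8 * s ^ 2 := by
    field_simp [Real.pi_ne_zero]
    ring
  linarith [Real.cos_le_one_sub_mul_cos_sq habs]

theorem mul_sq_sub_round_le_one_sub_cos_two_pi_mul (s : ℝ) :
    8 * (s - round s) ^ 2 ≤ 1 - Real.cos (2 * Real.pi * s) := by
  have hper : Real.cos (2 * Real.pi * (s - round s)) = Real.cos (2 * Real.pi * s) := by
    rw [← Real.cos_sub_int_mul_two_pi (2 * Real.pi * s) (round s)]
    congr 1
    ring
  exact hper ▸ mul_sq_le_one_sub_cos_two_pi_mul (abs_sub_round s)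

theorem norm_prod_sub_prod_le {ι R : Type*} [NormedCommRing R] [NormOneClass R]
    (s : Finset ι) {f g : ι → R} {M ε : ℝ} (hf : ∀ i ∈ s, ‖f i‖ ≤ M) (hg : ∀ i ∈ s, ‖g i‖ ≤ M)
    (hfg : ∀ i ∈ s, ‖f i - g i‖ ≤ ε) :
    ‖∏ i ∈ s, f i - ∏ i ∈ s, g i‖ ≤ s.card * M ^ (s.card - 1) * ε := by
  induction s using Finset.cons_induction with
  | empty => simp
  | cons a s ha ih =>
    simp only [Finset.mem_cons, forall_eq_or_imp] at hf hg hfg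
    have hM : 0 ≤ M := (norm_nonneg _).trans hf.1
    have hε : 0 ≤ ε := (norm_nonneg _).trans hfg.1
    have hprod : ‖∏ i ∈ s, g i‖ ≤ M ^ s.card :=
      (Finset.norm_prod_le _ _).trans <|
        (Finset.prod_le_prod (fun _ _ => norm_nonneg _) hg.2).trans_eq (Finset.prod_const M)
    have hpow : M * (s.card * M ^ (s.card - 1) * ε) = s.card * M ^ s.card * ε := by
      rcases s.card.eq_zero_or_pos with h | h
      · simp [h]
      · rw [← mul_pow_sub_one h.ne' M]
        ring
    rw [Finset.prod_cons, Finset.prod_cons, Finset.card_cons, Nat.add_sub_cancel]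
    calc ‖f a * ∏ i ∈ s, f i - g a * ∏ i ∈ s, g i‖
        = ‖f a * (∏ i ∈ s, f i - ∏ i ∈ s, g i) + (f a - g a) * ∏ i ∈ s, g i‖ := by
          congr 1
          ring
      _ ≤ ‖f a‖ * ‖∏ i ∈ s, f i - ∏ i ∈ s, g i‖ + ‖f a - g a‖ * ‖∏ i ∈ s, g i‖ :=
        norm_add_le_of_le (norm_mul_le _ _) (norm_mul_le _ _)
      _ ≤ M * (s.card * M ^ (s.card - 1) * ε) + ε * M ^ s.card := by
        gcongr
        exacts [hf.1, ih hf.2 hg.2 hfg.2, hfg.1]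
      _ = ((s.card + 1 : ℕ) : ℝ) * M ^ s.card * ε := by
        rw [hpow]
        push_cast
        ring

theorem integral_Icc_prod_eq_prod_intervalIntegral {ι 𝕜 : Type*} [Fintype ι] [RCLike 𝕜]
    (f : ι → ℝ → 𝕜) :
    ∫ s in Set.Icc (0 : ι → ℝ) 1, ∏ i, f i (s i) = ∏ i, ∫ s in (0 : ℝ)..1, f i s := by
  rw [← Set.pi_univ_Icc, volume_pi, Measure.restrict_pi_pi, integral_fintype_prod_eq_prod]
  simp [intervalIntegral.integral_of_le, integral_Icc_eq_integral_Ioc]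

theorem sqrt_one_add_le_two_mul {t x : ℝ} (hx : 1 ≤ x) (htx : t ≤ x ^ 2) : √(1 + t) ≤ 2 * x :=
  (Real.sqrt_le_left (by positivity)).2 (by nlinarith)

theorem rpow_two_sub_natCast {x : ℝ} (hx : 0 < x) (d : ℕ) :
    x ^ ((2 : ℝ) - d) = x ^ 2 / x ^ d := by
  rw [Real.rpow_sub hx, Real.rpow_two, Real.rpow_natCast]

theorem sq_rpow_one_sub_half {x : ℝ} (hx : 0 < x) (d : ℕ) :
    (x ^ 2) ^ (1 - (d : ℝ) / 2) = x ^ 2 / x ^ d := by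
  rw [← rpow_two_sub_natCast hx, ← Real.rpow_natCast_mul hx.le]
  ring_nf

-- At `η = 0` both sides are the junk value `0`: a non-integrable integrand and a division by zero.
theorem integral_Ioi_exp_neg_mul {η : ℝ} (hη : 0 ≤ η) (T : ℝ) :
    ∫ t in Set.Ioi T, Real.exp (-(t * η)) = Real.exp (-(T * η)) / η := by
  rcases hη.eq_or_lt with rfl | hη
  · simp [Measure.real]
  · simpa [mul_comm] using integral_exp_mul_Ioi (neg_lt_zero.2 hη) T

theorem norm_integral_Ioi_sub_integral_Ioi_le {E : Type*} [NormedAddCommGroup E]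
    [NormedSpace ℝ E] {f g : ℝ → E} {a b K : ℝ} (hab : a ≤ b)
    (hf : IntegrableOn f (Set.Ioi a)) (hg : IntegrableOn g (Set.Ioi a))
    (hfg : ∀ t ∈ Set.Ioc a b, ‖f t - g t‖ ≤ K) :
    ‖(∫ t in Set.Ioi a, f t) - ∫ t in Set.Ioi a, g t‖ ≤
      K * (b - a) + ‖∫ t in Set.Ioi b, f t‖ + ‖∫ t in Set.Ioi b, g t‖ := by
  have hsplit {h : ℝ → E} (hh : IntegrableOn h (Set.Ioi a)) :
      ∫ t in Set.Ioi a, h t = (∫ t in a..b, h t) + ∫ t in Set.Ioi b, h t :=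
    (intervalIntegral.integral_interval_add_Ioi hh (hh.mono_set (Set.Ioi_subset_Ioi hab))).symm
  have hinterval {h : ℝ → E} (hh : IntegrableOn h (Set.Ioi a)) : IntervalIntegrable h volume a b :=
    (intervalIntegrable_iff_integrableOn_Ioc_of_le hab).2 (hh.mono_set Set.Ioc_subset_Ioi_self)
  have hinitial : ‖(∫ t in a..b, f t) - ∫ t in a..b, g t‖ ≤ K * (b - a) := by
    rw [← intervalIntegral.integral_sub (hinterval hf) (hinterval hg),
      ← abs_of_nonneg (sub_nonneg.2 hab)]
    refine intervalIntegral.norm_integral_le_of_norm_le_const fun t ht => ?_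
    exact hfg t (by rwa [Set.uIoc_of_le hab] at ht)
  rw [hsplit hf, hsplit hg, add_sub_add_comm, add_assoc]
  exact (norm_add_le _ _).trans (add_le_add hinitial (norm_sub_le _ _))

/-! ### The one-dimensional heat kernel -/

/-- The function `exp (t (z + z⁻¹ - 2))`, the holomorphic extension to `ℂ \ {0}` of the symbol of
the heat semigroup on `ℤ`; it is what allows contours to be moved off the unit circle. -/
def heatLaurent (t : ℝ) (z : ℂ) : ℂ := Complex.exp (t * (z + z⁻¹ - 2))

theorem differentiableOn_heatLaurent (t : ℝ) : DifferentiableOn ℂ (heatLaurent t) {0}ᶜ :=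
  fun _ hz => (((differentiableAt_id.add (differentiableAt_inv hz)).sub_const 2).const_mul
    (t : ℂ)).cexp.differentiableWithinAt

/-- The symbol `exp (-2 t (1 - cos (2πx)))` of the heat semigroup on `ℤ`, encoded as the restriction
of `heatLaurent t` to the unit circle: its Fourier coefficients are the heat kernel of `ℤ`, and its
discrete Fourier coefficients that of `ℤ/nℤ`. -/
def heatSymbol (t : ℝ) : C(UnitAddCircle, ℂ) where
  toFun x := heatLaurent t (fourier 1 x)
  continuous_toFun := (differentiableOn_heatLaurent t).continuousOn.comp_continuous
    (fourier 1).continuous fun _ => Circle.coe_ne_zero _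

theorem norm_heatLaurent_exp_mul_fourier (t a s : ℝ) :
    ‖heatLaurent t (Real.exp a * fourier 1 (s : UnitAddCircle))‖ =
      Real.exp (t * (2 * (Real.cosh a * Real.cos (2 * Real.pi * s) - 1))) := by
  have hz : Real.exp a * fourier 1 (s : UnitAddCircle) =
      Complex.exp (a + (2 * Real.pi * s : ℝ) * Complex.I) := by
    rw [fourier_coe_apply, Complex.ofReal_exp, ← Complex.exp_add]
    congr 1
    push_cast
    ring
  rw [heatLaurent, hz, ← Complex.exp_neg, Complex.norm_exp, Complex.re_ofReal_mul]
  congr 2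
  simp only [Complex.sub_re, Complex.add_re, Complex.exp_re, Complex.neg_re, Complex.neg_im,
    Complex.re_ofReal_mul, Complex.im_ofReal_mul, Complex.ofReal_re, Complex.ofReal_im,
    Complex.add_im, Complex.I_re, Complex.I_im, Complex.re_ofNat, mul_zero, mul_one, add_zero,
    zero_add, Real.cos_neg, Real.cosh_eq]
  ring

theorem heatSymbol_coe (t s : ℝ) :
    heatSymbol t (s : UnitAddCircle) =
      (Real.exp (-(t * (2 * (1 - Real.cos (2 * Real.pi * s))))) : ℝ) := by
  have hz : fourier 1 (s : UnitAddCircle) = Complex.exp ((2 * Real.pi * s : ℝ) * Complex.I) := by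
    rw [fourier_coe_apply]
    congr 1
    push_cast
    ring
  rw [heatSymbol, ContinuousMap.coe_mk, heatLaurent, hz, ← Complex.exp_neg, ← neg_mul,
    ← Complex.two_cos]
  push_cast
  congr 1
  ring

theorem norm_heatLaurent_exp_mul_fourier_le {t a : ℝ} (ht : 0 ≤ t) (ha : a ^ 2 * (1 + t) ≤ 1)
    (s : ℝ) :
    ‖heatLaurent t (Real.exp a * fourier 1 (s : UnitAddCircle))‖ ≤
      Real.exp 2 * Real.exp (-(t * (2 * (1 - Real.cos (2 * Real.pi * s))))) := by
  rw [norm_heatLaurent_exp_mul_fourier, ← Real.exp_add, Real.exp_le_exp]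
  have hcosh : Real.cosh a - 1 ≤ a ^ 2 :=
    cosh_sub_one_le_sq (by nlinarith [mul_nonneg (sq_nonneg a) ht])
  have hcos := Real.cos_le_one (2 * Real.pi * s)
  have hle : (Real.cosh a - 1) * Real.cos (2 * Real.pi * s) ≤ a ^ 2 :=
    (mul_le_of_le_one_right (sub_nonneg.2 (Real.one_le_cosh a)) hcos).trans hcosh
  nlinarith [mul_le_mul_of_nonneg_left hle ht, sq_nonneg a]

theorem integral_exp_neg_mul_one_sub_cos_le {t : ℝ} (ht : 0 ≤ t) :
    ∫ s in (-1 / 2 : ℝ)..1 / 2, Real.exp (-(t * (2 * (1 - Real.cos (2 * Real.pi * s))))) ≤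
      Real.exp 4 / √(1 + t) := by
  have hpos : 0 < 16 * (1 + t) := by positivity
  have hgauss : Integrable fun s : ℝ => Real.exp 4 * Real.exp (-(16 * (1 + t)) * s ^ 2) :=
    (integrable_exp_neg_mul_sq hpos).const_mul _
  have hle (s : ℝ) (hs : s ∈ Set.Icc (-1 / 2 : ℝ) (1 / 2)) :
      Real.exp (-(t * (2 * (1 - Real.cos (2 * Real.pi * s))))) ≤
        Real.exp 4 * Real.exp (-(16 * (1 + t)) * s ^ 2) := by
    have hs' : |s| ≤ 1 / 2 := abs_le.2 ⟨by linarith [hs.1], hs.2⟩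
    rw [← Real.exp_add, Real.exp_le_exp]
    have hsq : s ^ 2 ≤ 1 / 4 := by
      rw [← sq_abs]
      nlinarith [abs_nonneg s]
    nlinarith [mul_le_mul_of_nonneg_left (mul_sq_le_one_sub_cos_two_pi_mul hs') ht]
  calc ∫ s in (-1 / 2 : ℝ)..1 / 2, Real.exp (-(t * (2 * (1 - Real.cos (2 * Real.pi * s)))))
      ≤ ∫ s in (-1 / 2 : ℝ)..1 / 2, Real.exp 4 * Real.exp (-(16 * (1 + t)) * s ^ 2) :=
        intervalIntegral.integral_mono_on (by norm_num)
          (by apply Continuous.intervalIntegrable; fun_prop)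
          hgauss.intervalIntegrable hle
    _ ≤ ∫ s, Real.exp 4 * Real.exp (-(16 * (1 + t)) * s ^ 2) := by
      rw [intervalIntegral.integral_of_le (by norm_num)]
      exact setIntegral_le_integral hgauss (.of_forall fun s => by positivity)
    _ = Real.exp 4 * (√(Real.pi / 16) / √(1 + t)) := by
      rw [integral_const_mul, integral_gaussian, ← div_div, Real.sqrt_div' _ (by positivity)]
    _ ≤ Real.exp 4 / √(1 + t) := by
      rw [← mul_div_assoc]
      gcongr
      refine mul_le_of_le_one_right (Real.exp_pos 4).le (Real.sqrt_le_one.2 ?_)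
      linarith [Real.pi_le_four]

theorem norm_fourierCoeff_heatSymbol_le_exp_neg_mul {t a : ℝ} (ht : 0 ≤ t)
    (ha : a ^ 2 * (1 + t) ≤ 1) (m : ℤ) :
    ‖fourierCoeff (heatSymbol t) m‖ ≤ Real.exp 6 / √(1 + t) * Real.exp (-(a * m)) := by
  have hnorm :
      ‖fourierCoeff (fun x : UnitAddCircle => heatLaurent t (Real.exp a * fourier 1 x)) m‖ ≤
        Real.exp 6 / √(1 + t) := by
    rw [fourierCoeff_eq_intervalIntegral _ _ (-1 / 2), div_one, one_smul]
    calc ‖∫ s in (-1 / 2 : ℝ)..-1 / 2 + 1, fourier (-m) (s : UnitAddCircle) •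
          heatLaurent t (Real.exp a * fourier 1 (s : UnitAddCircle))‖
        ≤ ∫ s in (-1 / 2 : ℝ)..-1 / 2 + 1,
            Real.exp 2 * Real.exp (-(t * (2 * (1 - Real.cos (2 * Real.pi * s))))) := by
          refine intervalIntegral.norm_integral_le_of_norm_le (by norm_num)
            (.of_forall fun s _ => ?_) (Continuous.intervalIntegrable (by fun_prop) _ _)
          rw [norm_smul, fourier_apply, Circle.norm_coe, one_mul]
          exact norm_heatLaurent_exp_mul_fourier_le ht ha s
      _ ≤ Real.exp 2 * (Real.exp 4 / √(1 + t)) := by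
          rw [intervalIntegral.integral_const_mul, show (-1 / 2 : ℝ) + 1 = 1 / 2 by norm_num]
          gcongr
          exact integral_exp_neg_mul_one_sub_cos_le ht
      _ = Real.exp 6 / √(1 + t) := by
          rw [← mul_div_assoc, ← Real.exp_add]
          norm_num
  have hshift := fourierCoeff_comp_fourier_one_eq_zpow_smul (differentiableOn_heatLaurent t)
    (Real.exp_pos a) m
  rw [show ⇑(heatSymbol t) = fun x => heatLaurent t (fourier 1 x) from rfl, hshift, norm_smul,
    mul_comm]
  gcongr
  rw [norm_zpow, Complex.norm_real, Real.norm_of_nonneg (Real.exp_pos a).le, ← Real.rpow_intCast,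
    ← Real.exp_mul, Int.cast_neg, mul_neg]

theorem norm_fourierCoeff_heatSymbol_le {t : ℝ} (ht : 0 ≤ t) (m : ℤ) :
    ‖fourierCoeff (heatSymbol t) m‖ ≤
      Real.exp 6 / √(1 + t) * Real.exp (-((√(1 + t))⁻¹ * |(m : ℝ)|)) := by
  have ha : (√(1 + t))⁻¹ ^ 2 * (1 + t) ≤ 1 := by
    rw [inv_pow, Real.sq_sqrt (by positivity), inv_mul_cancel₀ (by positivity)]
  rcases abs_cases (m : ℝ) with ⟨h, -⟩ | ⟨h, -⟩ <;> rw [h]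
  · exact norm_fourierCoeff_heatSymbol_le_exp_neg_mul ht ha m
  · rw [mul_neg, ← neg_mul]
    exact norm_fourierCoeff_heatSymbol_le_exp_neg_mul ht (by rwa [neg_sq]) m

theorem norm_fourierCoeff_heatSymbol_le_div_sqrt {t : ℝ} (ht : 0 ≤ t) (m : ℤ) :
    ‖fourierCoeff (heatSymbol t) m‖ ≤ Real.exp 6 / √(1 + t) :=
  (norm_fourierCoeff_heatSymbol_le ht m).trans <|
    mul_le_of_le_one_right (by positivity) <| Real.exp_le_one_iff.2 <| neg_nonpos.2 <| by positivity

theorem norm_discreteFourierCoeff_heatSymbol_sub_le {t : ℝ} (ht : 0 ≤ t) {n : ℕ}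
    (hn : n ≠ 0) {j : ℤ} (hj : 2 * |j| ≤ n) {k : ℕ} (hk : k ≠ 0) :
    ‖discreteFourierCoeff n (heatSymbol t) j - fourierCoeff (heatSymbol t) j‖ ≤
      2 * Real.exp 6 * k.factorial / √(1 + t) * (2 * √(1 + t) / n) ^ k := by
  have hσ : 0 < √(1 + t) := Real.sqrt_pos.2 (by positivity)
  have hx : 0 < (√(1 + t))⁻¹ * n / 2 := by positivity
  calc ‖discreteFourierCoeff n (heatSymbol t) j - fourierCoeff (heatSymbol t) j‖
      ≤ 2 * (Real.exp 6 / √(1 + t)) / (Real.exp ((√(1 + t))⁻¹ * n / 2) - 1) :=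
        norm_discreteFourierCoeff_sub_fourierCoeff_le (inv_pos.2 hσ)
          (norm_fourierCoeff_heatSymbol_le ht) hn hj
    _ ≤ 2 * (Real.exp 6 / √(1 + t)) / (((√(1 + t))⁻¹ * n / 2) ^ k / k.factorial) := by
        gcongr
        exact pow_div_factorial_le_exp_sub_one hx.le hk
    _ = 2 * Real.exp 6 * k.factorial / √(1 + t) * (2 * √(1 + t) / n) ^ k := by
        rw [show (√(1 + t))⁻¹ * n / 2 = (2 * √(1 + t) / n)⁻¹ by field_simp, inv_pow]
        field_simp

theorem norm_discreteFourierCoeff_heatSymbol_le {t : ℝ} (ht : 0 ≤ t) {n : ℕ} (hn : n ≠ 0)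
    (htn : t ≤ (n : ℝ) ^ 2) {j : ℤ} (hj : 2 * |j| ≤ n) :
    ‖discreteFourierCoeff n (heatSymbol t) j‖ ≤ 9 * Real.exp 6 / √(1 + t) := by
  have hn' : (1 : ℝ) ≤ n := Nat.one_le_cast.2 (Nat.one_le_iff_ne_zero.2 hn)
  have hdiff : ‖discreteFourierCoeff n (heatSymbol t) j - fourierCoeff (heatSymbol t) j‖ ≤
      8 * Real.exp 6 / √(1 + t) := calc
    _ ≤ 2 * Real.exp 6 * Nat.factorial 1 / √(1 + t) * (2 * √(1 + t) / n) ^ 1 :=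
      norm_discreteFourierCoeff_heatSymbol_sub_le ht hn hj one_ne_zero
    _ ≤ 2 * Real.exp 6 * Nat.factorial 1 / √(1 + t) * 4 ^ 1 := by
      gcongr
      rw [div_le_iff₀ (by positivity)]
      linarith [sqrt_one_add_le_two_mul hn' htn]
    _ = 8 * Real.exp 6 / √(1 + t) := by
      rw [Nat.factorial_one]
      ring
  calc ‖discreteFourierCoeff n (heatSymbol t) j‖
      ≤ 8 * Real.exp 6 / √(1 + t) + Real.exp 6 / √(1 + t) :=
        (norm_le_norm_sub_add _ _).trans
          (add_le_add hdiff (norm_fourierCoeff_heatSymbol_le_div_sqrt ht j))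
    _ = 9 * Real.exp 6 / √(1 + t) := by ring

/-! ### Heat kernels in dimension `d` -/

section HeatKernels

variable {d : ℕ}

/-- The Fourier symbol of the negative Laplacian `2d - ∑_{y ∼ x}` on `ℤ^d`. -/
def latticeSymbol (s : Fin d → ℝ) : ℝ := 2 * ∑ i, (1 - Real.cos (2 * Real.pi * s i))

/-- The contribution of the frequency `s` to the heat kernels at time `t` and displacement `j`. -/
def heatMode (t : ℝ) (j : Fin d → ℤ) (s : Fin d → ℝ) : ℝ :=
  Real.cos (2 * Real.pi * ∑ i, j i * s i) * Real.exp (-(t * latticeSymbol s))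

/-- The heat kernel of `ℤ^d` at time `t` and displacement `j`, with generator `∑_{y ∼ x} - 2d` (jump
rate `1` along each edge, so that its time integral is the unnormalised Green's function). -/
def latticeHeatKernel (t : ℝ) (j : Fin d → ℤ) : ℝ :=
  ∫ s in Set.Icc (0 : Fin d → ℝ) 1, heatMode t j s

/-- The frequency `w / n` in the dual of the torus `(ℤ/nℤ)^d`. -/
def torusFrequency {n : ℕ} (w : Fin d → Fin n) : Fin d → ℝ := fun i => (w i : ℕ) / n

/-- The heat kernel of `(ℤ/nℤ)^d` at time `t` and displacement `j`, a sum over all torus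
frequencies; displacements are taken in `ℤ^d` to be comparable with `latticeHeatKernel`. -/
def torusHeatKernel (n : ℕ) (t : ℝ) (j : Fin d → ℤ) : ℝ :=
  1 / (n : ℝ) ^ d * ∑ w : Fin d → Fin n, heatMode t j (torusFrequency w)

theorem latticeSymbol_nonneg (s : Fin d → ℝ) : 0 ≤ latticeSymbol s :=
  mul_nonneg zero_le_two (Finset.sum_nonneg fun _ _ => sub_nonneg.2 (Real.cos_le_one _))

theorem continuous_latticeSymbol : Continuous (latticeSymbol (d := d)) := by
  unfold latticeSymbol
  fun_prop

theorem continuous_heatMode_uncurry (j : Fin d → ℤ) :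
    Continuous fun p : ℝ × (Fin d → ℝ) => heatMode p.1 j p.2 := by
  have := continuous_latticeSymbol (d := d)
  unfold heatMode
  fun_prop

theorem heatMode_zero_right (t : ℝ) (s : Fin d → ℝ) :
    heatMode t 0 s = Real.exp (-(t * latticeSymbol s)) := by
  simp [heatMode]

theorem abs_heatMode_le (t : ℝ) (j : Fin d → ℤ) (s : Fin d → ℝ) :
    |heatMode t j s| ≤ heatMode t 0 s := by
  rw [heatMode_zero_right, heatMode, abs_mul, Real.abs_exp]
  exact mul_le_of_le_one_left (Real.exp_pos _).le (Real.abs_cos_le_one _)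

theorem heatMode_eq_re_prod (t : ℝ) (j : Fin d → ℤ) (s : Fin d → ℝ) :
    heatMode t j s =
      (∏ i, fourier (-j i) (s i : UnitAddCircle) * heatSymbol t (s i : UnitAddCircle)).re := by
  have hchar : ∏ i, fourier (-j i) (s i : UnitAddCircle) =
      Complex.exp ((-(2 * Real.pi * ∑ i, j i * s i) : ℝ) * Complex.I) := by
    simp only [fourier_coe_apply, ← Complex.exp_sum]
    congr 1
    push_cast
    rw [Finset.mul_sum, ← Finset.sum_neg_distrib, Finset.sum_mul]
    exact Finset.sum_congr rfl fun i _ => by ring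
  have hsymbol : ∏ i, heatSymbol t (s i : UnitAddCircle) =
      (Real.exp (-(t * latticeSymbol s)) : ℝ) := by
    simp only [heatSymbol_coe, ← Complex.ofReal_prod, ← Real.exp_sum, latticeSymbol,
      Finset.sum_neg_distrib, Finset.mul_sum]
  rw [Finset.prod_mul_distrib, hchar, hsymbol, Complex.re_mul_ofReal, Complex.exp_ofReal_mul_I_re,
    Real.cos_neg, heatMode]

theorem latticeHeatKernel_eq_re_prod_fourierCoeff (t : ℝ) (j : Fin d → ℤ) :
    latticeHeatKernel t j = (∏ i, fourierCoeff (heatSymbol t) (j i)).re := by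
  have hcoeff (i : Fin d) : fourierCoeff (heatSymbol t) (j i) =
      ∫ s in (0 : ℝ)..1, fourier (-j i) (s : UnitAddCircle) * heatSymbol t (s : UnitAddCircle) := by
    simp [fourierCoeff_eq_intervalIntegral _ _ 0]
  simp only [hcoeff, ← integral_Icc_prod_eq_prod_intervalIntegral]
  rw [latticeHeatKernel, ← Complex.reCLM_apply, ← ContinuousLinearMap.integral_comp_comm]
  · simp [heatMode_eq_re_prod]
  · apply ContinuousOn.integrableOn_compact isCompact_Icc
    fun_prop

theorem torusHeatKernel_eq_re_prod_discreteFourierCoeff (n : ℕ) (t : ℝ) (j : Fin d → ℤ) :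
    torusHeatKernel n t j = (∏ i, discreteFourierCoeff n (heatSymbol t) (j i)).re := by
  simp only [discreteFourierCoeff, Finset.prod_mul_distrib, Finset.prod_const, Finset.card_univ,
    Fintype.card_fin]
  rw [Finset.prod_univ_sum, Fintype.piFinset_univ, torusHeatKernel, ← Complex.ofReal_natCast,
    ← Complex.ofReal_inv, ← Complex.ofReal_pow, Complex.re_ofReal_mul, Complex.re_sum, one_div,
    inv_pow]
  simp [heatMode_eq_re_prod, torusFrequency]

/-! ### Green's functions as time integrals -/

theorem abs_latticeHeatKernel_le {t : ℝ} (ht : 0 ≤ t) (j : Fin d → ℤ) :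
    |latticeHeatKernel t j| ≤ Real.exp 6 ^ d * (1 + t) ^ (-(d : ℝ) / 2) := by
  calc |latticeHeatKernel t j| ≤ ‖∏ i, fourierCoeff (heatSymbol t) (j i)‖ := by
        rw [latticeHeatKernel_eq_re_prod_fourierCoeff]
        exact Complex.abs_re_le_norm _
    _ ≤ ∏ _i : Fin d, Real.exp 6 / √(1 + t) := by
        rw [norm_prod]
        exact Finset.prod_le_prod (fun _ _ => norm_nonneg _) fun i _ =>
          norm_fourierCoeff_heatSymbol_le_div_sqrt ht _
    _ = Real.exp 6 ^ d * (1 + t) ^ (-(d : ℝ) / 2) := by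
        rw [Finset.prod_const, Finset.card_univ, Fintype.card_fin, div_pow, neg_div,
          Real.rpow_neg (by positivity), Real.rpow_div_two_eq_sqrt _ (by positivity),
          Real.rpow_natCast, div_eq_mul_inv]

theorem integral_Ioi_heatMode (T : ℝ) (j : Fin d → ℤ) (s : Fin d → ℝ) :
    ∫ t in Set.Ioi T, heatMode t j s = heatMode T j s / latticeSymbol s := by
  simp only [heatMode]
  rw [integral_const_mul, integral_Ioi_exp_neg_mul (latticeSymbol_nonneg s), mul_div_assoc]

theorem integrable_heatMode_prod (hd : 3 ≤ d) (j : Fin d → ℤ) :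
    Integrable (fun p : ℝ × (Fin d → ℝ) => heatMode p.1 j p.2)
      ((volume.restrict (Set.Ioi 0)).prod (volume.restrict (Set.Icc 0 1))) := by
  have hslice (k : Fin d → ℤ) (t : ℝ) : IntegrableOn (heatMode t k) (Set.Icc 0 1) :=
    ((continuous_heatMode_uncurry k).comp (.prodMk_right t)).integrableOn_Icc
  have hdecay :
      IntegrableOn (fun t : ℝ => Real.exp 6 ^ d * (1 + t) ^ (-(d : ℝ) / 2)) (Set.Ioi 0) := by
    have hd' : (3 : ℝ) ≤ d := by exact_mod_cast hd
    have := integrableOn_add_rpow_Ioi_of_lt (a := -(d : ℝ) / 2) (m := 1) (c := 0)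
      (by linarith) (by norm_num)
    simp only [add_comm _ (1 : ℝ)] at this
    exact this.const_mul _
  have hmeas := (continuous_heatMode_uncurry j).aestronglyMeasurable
    (μ := (volume.restrict (Set.Ioi 0)).prod (volume.restrict (Set.Icc 0 1)))
  refine (integrable_prod_iff hmeas).2 ⟨.of_forall fun t => hslice j t,
    hdecay.mono' hmeas.norm.integral_prod_right' <|
      (ae_restrict_mem measurableSet_Ioi).mono fun t ht => ?_⟩
  calc ‖∫ s in Set.Icc 0 1, ‖heatMode t j s‖‖ = ∫ s in Set.Icc 0 1, ‖heatMode t j s‖ :=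
        Real.norm_of_nonneg (integral_nonneg fun _ => norm_nonneg _)
    _ ≤ latticeHeatKernel t 0 :=
        integral_mono (hslice j t).norm (hslice 0 t) fun s => abs_heatMode_le t j s
    _ ≤ Real.exp 6 ^ d * (1 + t) ^ (-(d : ℝ) / 2) :=
        (le_abs_self _).trans (abs_latticeHeatKernel_le (le_of_lt ht) 0)

theorem integrableOn_latticeHeatKernel (hd : 3 ≤ d) (j : Fin d → ℤ) :
    IntegrableOn (fun t => latticeHeatKernel t j) (Set.Ioi 0) :=
  (integrable_heatMode_prod hd j).integral_prod_left

theorem greenZ_eq_integral_latticeHeatKernel (hd : 3 ≤ d) (y : Fin d → ℤ) :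
    greenZ d 0 y = ∫ t in Set.Ioi 0, latticeHeatKernel t y := by
  simp only [latticeHeatKernel]
  rw [integral_integral_swap (integrable_heatMode_prod hd y)]
  simp only [integral_Ioi_heatMode]
  simp [heatMode, greenZ, massGreenZ, latticeSymbol]

theorem abs_integral_Ioi_latticeHeatKernel_le (hd : 3 ≤ d) {T : ℝ} (hT : 0 < T) (j : Fin d → ℤ) :
    |∫ t in Set.Ioi T, latticeHeatKernel t j| ≤ 2 * Real.exp 6 ^ d * T ^ (1 - (d : ℝ) / 2) := by
  have hd' : (3 : ℝ) ≤ d := by exact_mod_cast hd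
  have hlt : -(d : ℝ) / 2 < -1 := by linarith
  have hbound : ∀ t ∈ Set.Ioi T,
      ‖latticeHeatKernel t j‖ ≤ Real.exp 6 ^ d * t ^ (-(d : ℝ) / 2) := by
    intro t ht
    have ht0 : 0 < t := hT.trans ht
    refine (abs_latticeHeatKernel_le ht0.le j).trans ?_
    gcongr ?_ * ?_
    exact Real.rpow_le_rpow_of_nonpos ht0 (by linarith) (by linarith)
  calc |∫ t in Set.Ioi T, latticeHeatKernel t j|
      ≤ ∫ t in Set.Ioi T, Real.exp 6 ^ d * t ^ (-(d : ℝ) / 2) :=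
        norm_integral_le_of_norm_le ((integrableOn_Ioi_rpow_of_lt hlt hT).const_mul _)
          ((ae_restrict_mem measurableSet_Ioi).mono hbound)
    _ = Real.exp 6 ^ d * (T ^ (1 - (d : ℝ) / 2) / (d / 2 - 1)) := by
        rw [integral_const_mul, integral_Ioi_rpow_of_lt hlt hT, ← neg_div_neg_eq, neg_neg]
        ring_nf
    _ ≤ Real.exp 6 ^ d * (T ^ (1 - (d : ℝ) / 2) / (1 / 2)) := by
        gcongr
        linarith
    _ = 2 * Real.exp 6 ^ d * T ^ (1 - (d : ℝ) / 2) := by ring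

/-- The nonzero elements of the dual of the torus `(ℤ/nℤ)^d`, over which the zero-average Green's
function is summed; written as in `torusGreen0`. -/
abbrev nonzeroModes (d n : ℕ) : Finset (Fin d → Fin n) :=
  Finset.univ.filter fun w => ∃ i, (w i : ℕ) ≠ 0

theorem one_div_sq_le_latticeSymbol_torusFrequency {n : ℕ} {w : Fin d → Fin n}
    (hw : w ∈ nonzeroModes d n) : 1 / (n : ℝ) ^ 2 ≤ latticeSymbol (torusFrequency w) := by
  obtain ⟨i, hi⟩ : ∃ i, (w i : ℕ) ≠ 0 := by simpa using hw
  have hn : 0 < n := (w i).pos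
  set s := torusFrequency w i
  have hndvd : ¬(n : ℤ) ∣ (w i : ℕ) := by
    rw [Int.natCast_dvd_natCast]
    exact Nat.not_dvd_of_pos_of_lt (Nat.pos_of_ne_zero hi) (w i).isLt
  have hint : ((w i : ℕ) : ℤ) - n * round s ≠ 0 := fun h =>
    hndvd ⟨round s, by linarith⟩
  have hdist : 1 / (n : ℝ) ≤ |s - round s| := by
    have heq : s - round s = (((w i : ℕ) - n * round s : ℤ) : ℝ) / n := by
      simp only [s, torusFrequency]
      push_cast
      field_simp
    rw [heq, abs_div, Nat.abs_cast]
    gcongr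
    exact_mod_cast Int.one_le_abs hint
  calc 1 / (n : ℝ) ^ 2 = (1 / (n : ℝ)) ^ 2 := (_root_.one_div_pow _ _).symm
    _ ≤ |s - round s| ^ 2 := by gcongr
    _ ≤ 1 - Real.cos (2 * Real.pi * s) := by
      rw [sq_abs]
      linarith [mul_sq_sub_round_le_one_sub_cos_two_pi_mul s, sq_nonneg (s - round s)]
    _ ≤ ∑ i, (1 - Real.cos (2 * Real.pi * torusFrequency w i)) :=
      Finset.single_le_sum (f := fun i => 1 - Real.cos (2 * Real.pi * torusFrequency w i))
        (fun _ _ => sub_nonneg.2 (Real.cos_le_one _)) (Finset.mem_univ i)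
    _ ≤ latticeSymbol (torusFrequency w) :=
      le_mul_of_one_le_left (Finset.sum_nonneg fun _ _ => sub_nonneg.2 (Real.cos_le_one _))
        one_le_two

theorem torusHeatKernel_sub_eq_sum_nonzeroModes {n : ℕ} (hn : n ≠ 0) (t : ℝ) (j : Fin d → ℤ) :
    torusHeatKernel n t j - 1 / (n : ℝ) ^ d =
      1 / (n : ℝ) ^ d * ∑ w ∈ nonzeroModes d n, heatMode t j (torusFrequency w) := by
  have : NeZero n := ⟨hn⟩
  have hzero : heatMode t j (torusFrequency (0 : Fin d → Fin n)) = 1 := by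
    simp [heatMode, torusFrequency, latticeSymbol]
  have hmodes : nonzeroModes d n = Finset.univ.erase 0 := by
    ext w
    simp only [nonzeroModes, Finset.mem_filter_univ, Finset.mem_erase, Finset.mem_univ, and_true,
      Function.ne_iff, Pi.zero_apply, ne_eq, Fin.val_eq_zero_iff]
  rw [hmodes, Finset.sum_erase_eq_sub (Finset.mem_univ _), hzero, torusHeatKernel]
  ring

theorem cos_zmod_val_eq_heatMode_zero {n : ℕ} (hn : n ≠ 0) (y : Fin d → ℤ) (w : Fin d → Fin n) :
    Real.cos (2 * Real.pi * (∑ i, ((w i : ℕ) : ℝ) * ((0 - (y i : ZMod n)).val : ℝ)) / n) =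
      heatMode 0 y (torusFrequency w) := by
  have : NeZero n := ⟨hn⟩
  have hval (i : Fin d) : ∃ q : ℤ, (((0 - (y i : ZMod n)).val : ℤ)) = n * q - y i := by
    have hcast : (((0 - (y i : ZMod n)).val : ℤ) : ZMod n) = ((-y i : ℤ) : ZMod n) := by simp
    obtain ⟨q, hq⟩ := (ZMod.intCast_eq_intCast_iff_dvd_sub _ _ _).1 hcast.symm
    exact ⟨q, by linarith⟩
  choose q hq using hval
  have harg : 2 * Real.pi * (∑ i, ((w i : ℕ) : ℝ) * ((0 - (y i : ZMod n)).val : ℝ)) / n =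
      ((∑ i, (w i : ℕ) * q i : ℤ) : ℝ) * (2 * Real.pi) -
        2 * Real.pi * ∑ i, y i * torusFrequency w i := by
    have hq' (i : Fin d) : ((0 - (y i : ZMod n)).val : ℝ) = n * q i - y i := by
      exact_mod_cast hq i
    simp only [hq', torusFrequency]
    push_cast
    rw [mul_comm _ (2 * Real.pi), ← mul_sub, ← Finset.sum_sub_distrib, mul_div_assoc,
      Finset.sum_div]
    congr 1
    refine Finset.sum_congr rfl fun i _ => ?_
    field_simp
  rw [harg, Real.cos_int_mul_two_pi_sub, heatMode, zero_mul, neg_zero, Real.exp_zero, mul_one]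

theorem eta_eq_latticeSymbol {n : ℕ} (w : Fin d → Fin n) :
    eta d n w = latticeSymbol (torusFrequency w) := by
  simp only [eta, latticeSymbol, torusFrequency, mul_div_assoc]

theorem torusGreen0_eq_sum_heatMode {n : ℕ} (hn : n ≠ 0) (y : Fin d → ℤ) :
    torusGreen0 d n (fun _ => 0) (fun i => (y i : ZMod n)) =
      1 / (n : ℝ) ^ d * ∑ w ∈ nonzeroModes d n,
        heatMode 0 y (torusFrequency w) / latticeSymbol (torusFrequency w) := by
  simp only [torusGreen0, eta_eq_latticeSymbol, cos_zmod_val_eq_heatMode_zero hn]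

theorem integrableOn_Ioi_heatMode {s : Fin d → ℝ} (hs : 0 < latticeSymbol s) (T : ℝ)
    (j : Fin d → ℤ) : IntegrableOn (fun t => heatMode t j s) (Set.Ioi T) := by
  have := (integrableOn_exp_mul_Ioi (neg_lt_zero.2 hs) T).const_mul
    (Real.cos (2 * Real.pi * ∑ i, j i * s i))
  simp only [neg_mul, mul_comm (latticeSymbol s)] at this
  exact this

theorem latticeSymbol_torusFrequency_pos {n : ℕ} {w : Fin d → Fin n} (hw : w ∈ nonzeroModes d n) :
    0 < latticeSymbol (torusFrequency w) := by
  obtain ⟨i, -⟩ : ∃ i, (w i : ℕ) ≠ 0 := by simpa using hw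
  have : 0 < n := (w i).pos
  exact lt_of_lt_of_le (by positivity) (one_div_sq_le_latticeSymbol_torusFrequency hw)

theorem integrableOn_torusHeatKernel_sub {n : ℕ} (hn : n ≠ 0) (T : ℝ) (j : Fin d → ℤ) :
    IntegrableOn (fun t => torusHeatKernel n t j - 1 / (n : ℝ) ^ d) (Set.Ioi T) := by
  simp only [torusHeatKernel_sub_eq_sum_nonzeroModes hn]
  exact (integrable_finsetSum _ fun w hw =>
    integrableOn_Ioi_heatMode (latticeSymbol_torusFrequency_pos hw) T j).const_mul _

theorem integral_Ioi_torusHeatKernel_sub {n : ℕ} (hn : n ≠ 0) (T : ℝ) (j : Fin d → ℤ) :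
    ∫ t in Set.Ioi T, (torusHeatKernel n t j - 1 / (n : ℝ) ^ d) =
      1 / (n : ℝ) ^ d * ∑ w ∈ nonzeroModes d n,
        heatMode T j (torusFrequency w) / latticeSymbol (torusFrequency w) := by
  simp only [torusHeatKernel_sub_eq_sum_nonzeroModes hn]
  rw [integral_const_mul, integral_finsetSum _ fun w hw =>
    integrableOn_Ioi_heatMode (latticeSymbol_torusFrequency_pos hw) T j]
  simp only [integral_Ioi_heatMode]

theorem torusGreen0_eq_integral_torusHeatKernel {n : ℕ} (hn : n ≠ 0) (y : Fin d → ℤ) :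
    torusGreen0 d n (fun _ => 0) (fun i => (y i : ZMod n)) =
      ∫ t in Set.Ioi 0, (torusHeatKernel n t y - 1 / (n : ℝ) ^ d) := by
  rw [torusGreen0_eq_sum_heatMode hn, integral_Ioi_torusHeatKernel_sub hn]

theorem abs_torusHeatKernel_le {n : ℕ} (hn : n ≠ 0) {t : ℝ} (ht : 0 ≤ t) (htn : t ≤ (n : ℝ) ^ 2)
    {j : Fin d → ℤ} (hj : ∀ i, 2 * |j i| ≤ n) :
    |torusHeatKernel n t j| ≤ (9 * Real.exp 6 / √(1 + t)) ^ d := by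
  rw [torusHeatKernel_eq_re_prod_discreteFourierCoeff]
  refine (Complex.abs_re_le_norm _).trans ?_
  rw [norm_prod]
  exact (Finset.prod_le_prod (fun _ _ => norm_nonneg _) fun i _ =>
    norm_discreteFourierCoeff_heatSymbol_le ht hn htn (hj i)).trans_eq
    (by rw [Finset.prod_const, Finset.card_univ, Fintype.card_fin])

theorem abs_integral_Ioi_torusHeatKernel_sub_le {n : ℕ} (hn : n ≠ 0) (j : Fin d → ℤ) :
    |∫ t in Set.Ioi ((n : ℝ) ^ 2), (torusHeatKernel n t j - 1 / (n : ℝ) ^ d)| ≤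
      (9 * Real.exp 6) ^ d * ((n : ℝ) ^ 2 / (n : ℝ) ^ d) := by
  rw [integral_Ioi_torusHeatKernel_sub hn]
  set T := (n : ℝ) ^ 2
  have hT : 0 < T := by positivity
  have hpos (w : Fin d → Fin n) : 0 ≤ heatMode T 0 (torusFrequency w) := by
    rw [heatMode_zero_right]
    positivity
  have hmode : ∀ w ∈ nonzeroModes d n,
      |heatMode T j (torusFrequency w) / latticeSymbol (torusFrequency w)| ≤
        T * heatMode T 0 (torusFrequency w) := by
    intro w hw
    have hsymbol := one_div_sq_le_latticeSymbol_torusFrequency hw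
    rw [abs_div, abs_of_pos (latticeSymbol_torusFrequency_pos hw)]
    calc _ ≤ heatMode T 0 (torusFrequency w) / (1 / T) := by
          gcongr
          exacts [hpos w, abs_heatMode_le _ _ _]
      _ = T * heatMode T 0 (torusFrequency w) := by rw [one_div, div_inv_eq_mul, mul_comm]
  calc _ ≤ 1 / (n : ℝ) ^ d * ∑ w ∈ nonzeroModes d n, T * heatMode T 0 (torusFrequency w) := by
        rw [abs_mul, abs_of_nonneg (by positivity)]
        gcongr
        exact (Finset.abs_sum_le_sum_abs _ _).trans (Finset.sum_le_sum hmode)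
    _ ≤ 1 / (n : ℝ) ^ d * ∑ w, T * heatMode T 0 (torusFrequency w) := by
        gcongr
        exacts [fun w _ _ => mul_nonneg hT.le (hpos w), Finset.subset_univ _]
    _ = T * torusHeatKernel n T (0 : Fin d → ℤ) := by
        rw [← Finset.mul_sum, torusHeatKernel]
        ring
    _ ≤ T * (9 * Real.exp 6 / √(1 + T)) ^ d := by
        gcongr
        exact (le_abs_self _).trans (abs_torusHeatKernel_le hn hT.le le_rfl (by simp))
    _ ≤ T * (9 * Real.exp 6 / n) ^ d := by
        gcongr
        exact Real.le_sqrt_of_sq_le (by simp [T])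
    _ = (9 * Real.exp 6) ^ d * (T / (n : ℝ) ^ d) := by
        rw [div_pow]
        ring

theorem abs_torusHeatKernel_sub_latticeHeatKernel_le {n : ℕ} (hn : n ≠ 0) {t : ℝ} (ht : 0 ≤ t)
    (htn : t ≤ (n : ℝ) ^ 2) {j : Fin d → ℤ} (hj : ∀ i, 2 * |j i| ≤ n) :
    |torusHeatKernel n t j - latticeHeatKernel t j| ≤
      d * d.factorial * (18 * Real.exp 6) ^ d / (n : ℝ) ^ d := by
  rcases Nat.eq_zero_or_pos d with rfl | hd
  · simp [torusHeatKernel_eq_re_prod_discreteFourierCoeff,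
      latticeHeatKernel_eq_re_prod_fourierCoeff]
  set M := 9 * Real.exp 6 / √(1 + t)
  have hexp {a : ℝ} (ha : a ≤ 9) : a * Real.exp 6 / √(1 + t) ≤ M := by
    simp only [M]
    gcongr
  calc |torusHeatKernel n t j - latticeHeatKernel t j|
      ≤ ‖∏ i, discreteFourierCoeff n (heatSymbol t) (j i) -
          ∏ i, fourierCoeff (heatSymbol t) (j i)‖ := by
        rw [torusHeatKernel_eq_re_prod_discreteFourierCoeff,
          latticeHeatKernel_eq_re_prod_fourierCoeff, ← Complex.sub_re]
        exact Complex.abs_re_le_norm _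
    _ ≤ d * M ^ (d - 1) *
          (2 * Real.exp 6 * d.factorial / √(1 + t) * (2 * √(1 + t) / n) ^ d) := by
        simpa using norm_prod_sub_prod_le Finset.univ
          (fun i _ => norm_discreteFourierCoeff_heatSymbol_le ht hn htn (hj i))
          (fun i _ => (norm_fourierCoeff_heatSymbol_le_div_sqrt ht (j i)).trans <| by
            simpa using hexp (a := 1) (by norm_num))
          fun i _ => norm_discreteFourierCoeff_heatSymbol_sub_le ht hn (hj i) hd.ne'
    _ ≤ d * M ^ (d - 1) * (M * d.factorial * (2 * √(1 + t) / n) ^ d) := by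
        rw [mul_div_right_comm]
        gcongr
        exact hexp (by norm_num)
    _ = d * d.factorial * (M * (2 * √(1 + t) / n)) ^ d := by
        rw [mul_pow, ← pow_sub_one_mul hd.ne' M]
        ring
    _ = d * d.factorial * (18 * Real.exp 6) ^ d / (n : ℝ) ^ d := by
        have hbase : M * (2 * √(1 + t) / n) = 18 * Real.exp 6 / n := by
          simp only [M]
          field_simp
          norm_num
        rw [hbase, div_pow, mul_div_assoc]

theorem abs_torusHeatKernel_sub_one_div_sub_latticeHeatKernel_le {n : ℕ} (hn : n ≠ 0) {t : ℝ}
    (ht : 0 ≤ t) (htn : t ≤ (n : ℝ) ^ 2) {j : Fin d → ℤ} (hj : ∀ i, 2 * |j i| ≤ n) :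
    |torusHeatKernel n t j - 1 / (n : ℝ) ^ d - latticeHeatKernel t j| ≤
      (d * d.factorial * (18 * Real.exp 6) ^ d + 1) / (n : ℝ) ^ d := by
  rw [sub_right_comm, add_div]
  refine (abs_sub _ _).trans (add_le_add
    (abs_torusHeatKernel_sub_latticeHeatKernel_le hn ht htn hj) ?_)
  rw [abs_of_nonneg (by positivity)]

end HeatKernels

/-- Refined comparison of the zero-average Green's function on the torus
with the lattice Green's function: for `d ≥ 3` there are `C > 0` and `n₀` such that for all
`n ≥ n₀` and all `y ∈ [−n/2, n/2)^d ∩ ℤ^d`,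
`|G_n^0(0, ȳ) − G_{ℤ^d}(0, y)| ≤ C n^{2−d}`. -/
theorem zero_average_green_refined_estimate (d : ℕ) (hd : 3 ≤ d) :
    ∃ C : ℝ, 0 < C ∧ ∃ n0 : ℕ, ∀ n : ℕ, n0 ≤ n →
      ∀ y : Fin d → ℤ,
        (∀ i, -(n : ℝ) / 2 ≤ (y i : ℝ) ∧ (y i : ℝ) < (n : ℝ) / 2) →
        |torusGreen0 d n (fun _ => 0) (fun i => (y i : ZMod n)) - greenZ d 0 y|
          ≤ C * (n : ℝ) ^ ((2 : ℝ) - d) := by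
  refine ⟨(d * d.factorial * (18 * Real.exp 6) ^ d + 1) + (9 * Real.exp 6) ^ d +
    2 * Real.exp 6 ^ d, by positivity, 1, fun n hn y hy => ?_⟩
  have hn0 : n ≠ 0 := Nat.one_le_iff_ne_zero.1 hn
  have hnpos : (0 : ℝ) < n := by positivity
  have hcentred (i : Fin d) : 2 * |y i| ≤ n := by
    have : |(y i : ℝ)| ≤ n / 2 := abs_le.2 ⟨by linarith [(hy i).1], (hy i).2.le⟩
    exact_mod_cast (le_div_iff₀' two_pos).1 this
  have htorus := abs_integral_Ioi_torusHeatKernel_sub_le hn0 y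
  have hlattice := abs_integral_Ioi_latticeHeatKernel_le hd (pow_pos hnpos 2) y
  rw [sq_rpow_one_sub_half hnpos] at hlattice
  rw [torusGreen0_eq_integral_torusHeatKernel hn0, greenZ_eq_integral_latticeHeatKernel hd,
    rpow_two_sub_natCast hnpos]
  refine (norm_integral_Ioi_sub_integral_Ioi_le (sq_nonneg (n : ℝ))
    (integrableOn_torusHeatKernel_sub hn0 0 y) (integrableOn_latticeHeatKernel hd y) fun t ht =>
      abs_torusHeatKernel_sub_one_div_sub_latticeHeatKernel_le hn0 ht.1.le ht.2 hcentred).trans ?_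
  simp only [Real.norm_eq_abs]
  linear_combination htorus + hlattice

end
end
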